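/- arXiv:1801.03359 — 3 statements merged into one kernel-verified Lean document; each statement's English description precedes it below -/
import Mathlib

section
/- Assume f satisfies (A1)–(A3), fix χ > 0 and ε > 0 small. For x̂ ∈ NUE*_χ and n ∈ ℤ define q_ε(f̂^n(x̂)) := δ_ε · inf{e^{ε|m|} Q_ε(f̂^{m+n}(x̂)) : m ≤ 0}. Then: (1) for every n ∈ ℤ the infimum is attained (it is a minimum) and 0 < q_ε(x̂) < ε Q_ε(x̂); (2) (greedy algorithm) q_ε(f̂^n(x̂)) = min{e^ε q_ε(f̂^{n−1}(x̂)), δ_ε Q_ε(f̂^n(x̂))} for every n ∈ ℤ. -/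
open Real MeasureTheory Filter Topology Metric Set

noncomputable section

namespace OneDim

/-- The interval `M = [0, 1/2]`. -/
def Mset : Set ℝ := Set.Icc 0 (1/2)

/-- Data of a piecewise `C^{1+β}` interval map `f : M → M` with discontinuity set `D`,
constants `β ∈ (0,1)`, `a, K > 1`, radius function `r` and inverse branches `g`. -/
structure GoodMap where
  f : ℝ → ℝ
  D : Set ℝ
  β : ℝ
  a : ℝ
  K : ℝ
  r : ℝ → ℝ
  g : ℝ → ℝ → ℝ
  hβ0 : 0 < β
  hβ1 : β < 1
  ha : 1 < a
  hK : 1 < K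
  hmaps : ∀ x ∈ Mset, f x ∈ Mset
  hD : D ⊆ Mset
  hdiff : DifferentiableOn ℝ f (Mset \ D)

namespace GoodMap

/-- The critical set `C = {x ∈ M \ D : df_x = 0}`. -/
def crit (F : GoodMap) : Set ℝ := {x | x ∈ Mset \ F.D ∧ deriv F.f x = 0}

/-- The singular set `S = C ∪ D`. -/
def S (F : GoodMap) : Set ℝ := F.crit ∪ F.D

/-- Distance to the singular set. -/
def dS (F : GoodMap) (x : ℝ) : ℝ := Metric.infDist x F.S

/-- Conditions (A1)–(A3). -/
def SatA (F : GoodMap) : Prop :=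
  ∀ x ∈ Mset, x ∉ F.S → F.f x ∉ F.S →
    (min (F.dS x ^ F.a) (F.dS (F.f x) ^ F.a) < F.r x ∧ F.r x < 1) ∧
    -- (A1)
    (Set.InjOn F.f (Metric.ball x (2 * F.r x)) ∧
      (∀ y ∈ Metric.ball x (2 * F.r x), DifferentiableAt ℝ F.f y) ∧
      F.g x (F.f x) = x ∧
      (∀ z ∈ Metric.ball (F.f x) (2 * F.r x), F.f (F.g x z) = z) ∧
      Set.InjOn (F.g x) (Metric.ball (F.f x) (2 * F.r x)) ∧
      (∀ z ∈ Metric.ball (F.f x) (2 * F.r x), DifferentiableAt ℝ (F.g x) z)) ∧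
    -- (A2)
    ((∀ y ∈ Metric.ball x (2 * F.r x),
        F.dS x ^ F.a ≤ |deriv F.f y| ∧ |deriv F.f y| ≤ F.dS x ^ (-F.a)) ∧
      (∀ z ∈ Metric.ball (F.f x) (2 * F.r x),
        F.dS x ^ F.a ≤ |deriv (F.g x) z| ∧ |deriv (F.g x) z| ≤ F.dS x ^ (-F.a))) ∧
    -- (A3)
    ((∀ y ∈ Metric.ball x (2 * F.r x), ∀ z ∈ Metric.ball x (2 * F.r x),
        |deriv F.f y - deriv F.f z| ≤ F.K * |y - z| ^ F.β) ∧
      (∀ y ∈ Metric.ball (F.f x) (2 * F.r x), ∀ z ∈ Metric.ball (F.f x) (2 * F.r x),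
        |deriv (F.g x) y - deriv (F.g x) z| ≤ F.K * |y - z| ^ F.β))

end GoodMap

/-- Membership in the natural extension space `M̂`. -/
def inMhat (f : ℝ → ℝ) (x : ℤ → ℝ) : Prop :=
  (∀ n, x n ∈ Mset) ∧ ∀ n : ℤ, f (x (n - 1)) = x n

/-- The natural extension map `f̂` (left shift). -/
def fhat (x : ℤ → ℝ) : ℤ → ℝ := fun n => x (n + 1)

/-- Iterate `f̂^k` of the natural extension map, `k ∈ ℤ`. -/
def fhatI (k : ℤ) (x : ℤ → ℝ) : ℤ → ℝ := fun n => x (n + k)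

/-- The metric `d̂(x̂,ŷ) = sup{2^n d(x_n,y_n) : n ≤ 0}` on `M̂`. -/
def dhat (x y : ℤ → ℝ) : ℝ :=
  sSup {t : ℝ | ∃ n : ℤ, n ≤ 0 ∧ t = (2:ℝ) ^ n * |x n - y n|}

/-- The invertible derivative cocycle `d̂f^{(n)}` over `f̂`. -/
def dfhat (f : ℝ → ℝ) (x : ℤ → ℝ) (n : ℤ) : ℝ :=
  if 0 ≤ n then ∏ j ∈ Finset.range n.toNat, deriv f (x (j : ℤ))
  else (∏ j ∈ Finset.range (-n).toNat, deriv f (x (-(j : ℤ) - 1)))⁻¹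

/-- The Pesin parameter `u(x̂)`. -/
def uPes (f : ℝ → ℝ) (χ : ℝ) (x : ℤ → ℝ) : ℝ :=
  Real.sqrt (∑' n : ℕ, Real.exp (2 * (n:ℝ) * χ) * (dfhat f x (-(n:ℤ))) ^ 2)

/-- The Pesin chart `Ψ_{x̂}(t) = t/u(x̂) + x₀`. -/
def Psi (f : ℝ → ℝ) (χ : ℝ) (x : ℤ → ℝ) (t : ℝ) : ℝ := t / uPes f χ x + x 0

/-- The set `NUE_χ`. -/
def NUE (F : GoodMap) (χ : ℝ) : Set (ℤ → ℝ) :=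
  {x | inMhat F.f x ∧ (∀ n, x n ∉ F.S) ∧
    (∃ l > χ, Tendsto (fun n : ℕ => Real.log |dfhat F.f x (n:ℤ)| / (n:ℝ)) atTop (𝓝 l)) ∧
    (∃ l > χ, Tendsto (fun n : ℕ => Real.log |dfhat F.f x (-(n:ℤ))| / (-(n:ℝ))) atTop (𝓝 l))}

/-- `ρ(x̂) = d({x₋₁,x₀,x₁}, S)`. -/
def rho (F : GoodMap) (x : ℤ → ℝ) : ℝ :=
  min (F.dS (x (-1))) (min (F.dS (x 0)) (F.dS (x 1)))

/-- `I_ε = {e^{-εn/3} : n ≥ 0}`. -/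
def Ieps (ε : ℝ) : Set ℝ := {q | ∃ n : ℕ, q = Real.exp (-(ε * n) / 3)}

/-- `Q̃_ε(x̂)`. -/
def Qtilde (F : GoodMap) (χ ε : ℝ) (x : ℤ → ℝ) : ℝ :=
  ε ^ (3 / F.β) *
    min (uPes F.f χ x ^ (-(24 / F.β)))
      (uPes F.f χ (fhatI (-1) x) ^ (-(12 / F.β)) * rho F x ^ (72 * F.a / F.β))

/-- `Q_ε(x̂) = max{q ∈ I_ε : q ≤ Q̃_ε(x̂)}`. -/
def Qeps (F : GoodMap) (χ ε : ℝ) (x : ℤ → ℝ) : ℝ :=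
  sSup {q | q ∈ Ieps ε ∧ q ≤ Qtilde F χ ε x}

/-- The regular set. -/
def Reg (F : GoodMap) : Set (ℤ → ℝ) :=
  {x | inMhat F.f x ∧ (∀ n, x n ∉ F.S) ∧
    Tendsto (fun n : ℕ => Real.log (F.dS (x (n:ℤ))) / (n:ℝ)) atTop (𝓝 0) ∧
    Tendsto (fun n : ℕ => Real.log (F.dS (x (-(n:ℤ)))) / (n:ℝ)) atTop (𝓝 0)}

/-- The set `NUE*_χ`. -/
def NUEstar (F : GoodMap) (χ : ℝ) : Set (ℤ → ℝ) :=
  {x | x ∈ NUE F χ ∧ x ∈ Reg F ∧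
    (∃ nk : ℕ → ℤ, Tendsto nk atTop atBot ∧
      Tendsto (fun k => uPes F.f χ (fhatI (nk k) x)) atTop (𝓝 (uPes F.f χ x))) ∧
    Tendsto (fun n : ℕ => Real.log (uPes F.f χ (fhatI (-(n:ℤ)) x)) / (-(n:ℝ))) atTop (𝓝 0)}

/-- An ε-chart is a pair `(x̂, p)`, representing `Ψ_{x̂}` restricted to `[-p,p]`. -/
structure Chart where
  x : ℤ → ℝ
  p : ℝ

/-- `(x̂, p)` is a genuine ε-chart. -/
def IsChart (F : GoodMap) (χ ε : ℝ) (c : Chart) : Prop :=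
  c.x ∈ NUE F χ ∧ 0 < c.p ∧ c.p ≤ Qeps F χ ε c.x

/-- ε-overlap of two ε-charts. -/
def Overlap (F : GoodMap) (χ ε : ℝ) (c₁ c₂ : Chart) : Prop :=
  Real.exp (-ε) ≤ c₁.p / c₂.p ∧ c₁.p / c₂.p ≤ Real.exp ε ∧
  |c₁.x 0 - c₂.x 0| + |(uPes F.f χ c₁.x)⁻¹ - (uPes F.f χ c₂.x)⁻¹| < (c₁.p * c₂.p) ^ 4

/-- `g_{x̂} = g_{x₋₁}`, the inverse branch of `f` taking `x₀` to `x₋₁`. -/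
def ghat (F : GoodMap) (x : ℤ → ℝ) : ℝ → ℝ := F.g (x (-1))

/-- `G_{x̂} = Ψ_{f̂⁻¹x̂}⁻¹ ∘ g_{x̂} ∘ Ψ_{x̂}`. -/
def Gmap (F : GoodMap) (χ : ℝ) (x : ℤ → ℝ) (t : ℝ) : ℝ :=
  uPes F.f χ (fhatI (-1) x) * (ghat F x (Psi F.f χ x t) - x (-1))

/-- `G_{x̂,ŷ} = Ψ_{ŷ}⁻¹ ∘ g_{x̂} ∘ Ψ_{x̂}`. -/
def Gmap2 (F : GoodMap) (χ : ℝ) (x y : ℤ → ℝ) (t : ℝ) : ℝ :=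
  uPes F.f χ y * (ghat F x (Psi F.f χ x t) - y 0)

/-- `F_{x̂} = Ψ_{f̂x̂}⁻¹ ∘ f ∘ Ψ_{x̂}`. -/
def Fmap (F : GoodMap) (χ : ℝ) (x : ℤ → ℝ) (t : ℝ) : ℝ :=
  uPes F.f χ (fhat x) * (F.f (Psi F.f χ x t) - x 1)

/-- `δ_ε = e^{-εn}` where `n` is the unique positive integer with `e^{-εn} < ε ≤ e^{-ε(n-1)}`. -/
def deltaEps (ε : ℝ) : ℝ :=
  Real.exp (-(ε * ((⌊Real.log (1 / ε) / ε⌋ + 1 : ℤ) : ℝ)))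

/-- Weak edge `v ⤎ w` (from `w = Ψ_{x̂}^p` to `v = Ψ_{ŷ}^q`). -/
def WeakEdge (F : GoodMap) (χ ε : ℝ) (v w : Chart) : Prop :=
  IsChart F χ ε v ∧ IsChart F χ ε w ∧
  Overlap F χ ε ⟨fhatI (-1) w.x, v.p⟩ v ∧
  w.p ≤ Real.exp ε * v.p

/-- Edge `v ← w` (from `w = Ψ_{x̂}^p` to `v = Ψ_{ŷ}^q`). -/
def Edge (F : GoodMap) (χ ε : ℝ) (v w : Chart) : Prop :=
  IsChart F χ ε v ∧ IsChart F χ ε w ∧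
  Overlap F χ ε ⟨fhatI (-1) w.x, v.p⟩ v ∧
  |v.x 1 - w.x 0| < v.p ∧
  Real.exp (-v.p) ≤ uPes F.f χ (fhat v.x) / uPes F.f χ w.x ∧
  uPes F.f χ (fhat v.x) / uPes F.f χ w.x ≤ Real.exp v.p ∧
  w.p = min (Real.exp ε * v.p) (deltaEps ε * Qeps F χ ε w.x)

/-- ε-generalized pseudo-orbit. -/
def IsGPO (F : GoodMap) (χ ε : ℝ) (v : ℤ → Chart) : Prop :=
  ∀ n : ℤ, Edge F χ ε (v n) (v (n + 1))

/-- weak ε-generalized pseudo-orbit. -/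
def IsWeakGPO (F : GoodMap) (χ ε : ℝ) (v : ℤ → Chart) : Prop :=
  ∀ n : ℤ, WeakEdge F χ ε (v n) (v (n + 1))

/-- The range `Ψ_{x̂}([-p,p])` of an ε-chart. -/
def chartRange (F : GoodMap) (χ : ℝ) (c : Chart) : Set ℝ :=
  Psi F.f χ c.x '' Set.Icc (-c.p) c.p

/-- A bi-infinite sequence of ε-charts shadows `x̂ ∈ M̂`. -/
def Shadows (F : GoodMap) (χ : ℝ) (v : ℤ → Chart) (x : ℤ → ℝ) : Prop :=
  inMhat F.f x ∧ ∀ n : ℤ, x n ∈ chartRange F χ (v n)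

/-- `q_ε(x̂) = δ_ε inf{e^{ε|m|} Q_ε(f̂^m x̂) : m ≤ 0}`. -/
def qeps (F : GoodMap) (χ ε : ℝ) (x : ℤ → ℝ) : ℝ :=
  deltaEps ε *
    sInf {t : ℝ | ∃ m : ℤ, m ≤ 0 ∧ t = Real.exp (ε * |(m:ℝ)|) * Qeps F χ ε (fhatI m x)}

/-- Recurrence: some symbol repeats infinitely often in the future and some in the past. -/
def Recurrent {V : Type*} (v : ℤ → V) : Prop :=
  (∃ c, {n : ℤ | 0 < n ∧ v n = c}.Infinite) ∧ ∃ c, {n : ℤ | n < 0 ∧ v n = c}.Infinite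

/-- The distance `d(v,w) = exp(-min{|n| : v_n ≠ w_n})` on sequence spaces. -/
def dSigma {V : Type*} (v w : ℤ → V) : ℝ :=
  sSup {t : ℝ | ∃ n : ℤ, v n ≠ w n ∧ t = Real.exp (-|(n:ℝ)|)}

/-- Sup norm over a set. -/
def supNorm (h : ℝ → ℝ) (I : Set ℝ) : ℝ := sSup ((fun t => |h t|) '' I)

/-- Hölder constant over a set. -/
def holConst (γ : ℝ) (h : ℝ → ℝ) (I : Set ℝ) : ℝ :=
  sSup {r : ℝ | ∃ t ∈ I, ∃ s ∈ I, t ≠ s ∧ r = |h t - h s| / |t - s| ^ γ}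

lemma aux_dfhat_neg (f : ℝ → ℝ) (x : ℤ → ℝ) (n : ℕ) :
    dfhat f x (-(n:ℤ)) = (∏ j ∈ Finset.range n, deriv f (x (-(j : ℤ) - 1)))⁻¹ := by
  unfold dfhat
  rcases Nat.eq_zero_or_pos n with h | h
  · subst h; simp
  · rw [if_neg (by omega)]; simp

lemma aux_fhatI_comp (m n : ℤ) (x : ℤ → ℝ) : fhatI m (fhatI n x) = fhatI (m + n) x := by
  funext k; simp only [fhatI]; congr 1; ring

/-- The terms of the series defining `u`. -/
def auxTerm (f : ℝ → ℝ) (χ : ℝ) (x : ℤ → ℝ) (n : ℕ) : ℝ :=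
  Real.exp (2 * (n:ℝ) * χ) * (dfhat f x (-(n:ℤ))) ^ 2

lemma aux_term_succ (f : ℝ → ℝ) (χ : ℝ) (x : ℤ → ℝ) (n : ℕ) :
    auxTerm f χ x (n+1) =
      (Real.exp (2 * χ) * ((deriv f (x (-1)))⁻¹) ^ 2) * auxTerm f χ (fhatI (-1) x) n := by
  unfold auxTerm
  rw [aux_dfhat_neg, aux_dfhat_neg, Finset.prod_range_succ']
  have e : Real.exp (2 * ((n+1 : ℕ):ℝ) * χ) = Real.exp (2 * χ) * Real.exp (2 * (n:ℝ) * χ) := by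
    rw [← Real.exp_add]; congr 1; push_cast; ring
  have e2 : ∏ k ∈ Finset.range n, deriv f (x (-((k + 1 : ℕ) : ℤ) - 1)) =
      ∏ j ∈ Finset.range n, deriv f (fhatI (-1) x (-(j : ℤ) - 1)) := by
    apply Finset.prod_congr rfl
    intro j _
    simp only [fhatI]
    congr 2; push_cast; ring
  rw [e, e2, mul_inv]
  simp only [Nat.cast_zero, neg_zero, zero_sub]
  ring

lemma aux_summable_shift (f : ℝ → ℝ) (χ : ℝ) (x : ℤ → ℝ) (h : deriv f (x (-1)) ≠ 0) :
    Summable (auxTerm f χ x) ↔ Summable (auxTerm f χ (fhatI (-1) x)) := by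
  rw [← summable_nat_add_iff 1]
  simp only [aux_term_succ]
  apply summable_mul_left_iff
  positivity

lemma aux_deriv_ne (F : GoodMap) (y : ℝ) (hy : y ∈ Mset) (hS : y ∉ F.S) : deriv F.f y ≠ 0 := by
  intro h
  apply hS
  by_cases hD : y ∈ F.D
  · exact Or.inr hD
  · exact Or.inl ⟨⟨hy, hD⟩, h⟩

lemma aux_dS_pos (F : GoodMap) (hA : F.SatA) (y : ℝ) (hy : y ∈ Mset) (hS : y ∉ F.S)
    (hS' : F.f y ∉ F.S) : 0 < F.dS y := by
  have h0 : 0 ≤ F.dS y := Metric.infDist_nonneg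
  rcases h0.lt_or_eq with h | h
  · exact h
  exfalso
  obtain ⟨⟨hr, -⟩, -, ⟨hd, -⟩, -⟩ := hA y hy hS hS'
  have ha := F.ha
  have hr0 : 0 < F.r y := by
    refine lt_of_le_of_lt ?_ hr
    exact le_min (Real.rpow_nonneg Metric.infDist_nonneg _)
      (Real.rpow_nonneg Metric.infDist_nonneg _)
  have := (hd y (Metric.mem_ball_self (by linarith))).2
  rw [← h, Real.zero_rpow (by linarith)] at this
  exact aux_deriv_ne F y hy hS (abs_nonpos_iff.1 this)

lemma aux_summable0 (F : GoodMap) (χ : ℝ) (x : ℤ → ℝ) (hx : x ∈ NUE F χ) :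
    Summable (auxTerm F.f χ x) := by
  obtain ⟨hM, hS, -, l, hl, ht⟩ := hx
  obtain ⟨l', h1, h2⟩ := exists_between (show χ < l from hl)
  have hg : Summable (fun n : ℕ => (Real.exp (2 * (χ - l'))) ^ n) :=
    summable_geometric_of_lt_one (Real.exp_pos _).le (Real.exp_lt_one_iff.2 (by linarith))
  refine Summable.of_norm_bounded_eventually_nat hg ?_
  filter_upwards [ht.eventually (lt_mem_nhds h2), eventually_gt_atTop 0] with n hn hn0
  have hn0' : (0:ℝ) < n := by exact_mod_cast hn0
  have hd0 : dfhat F.f x (-(n:ℤ)) ≠ 0 := by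
    rw [aux_dfhat_neg]
    apply inv_ne_zero
    rw [Finset.prod_ne_zero_iff]
    intro j _
    exact aux_deriv_ne F _ (hM.1 _) (hS _)
  have hlog : Real.log |dfhat F.f x (-(n:ℤ))| < -(n * l') := by
    rw [div_neg, lt_neg, div_lt_iff₀ hn0'] at hn
    linarith
  have hle : |dfhat F.f x (-(n:ℤ))| ≤ Real.exp (-(n * l')) := by
    rw [← Real.exp_log (abs_pos.2 hd0)]
    exact Real.exp_le_exp.2 hlog.le
  unfold auxTerm
  rw [Real.norm_of_nonneg (by positivity), ← sq_abs]
  calc _ ≤ Real.exp (2 * (n:ℝ) * χ) * (Real.exp (-(n * l'))) ^ 2 := by gcongr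
    _ = _ := by
      rw [← Real.exp_nat_mul, ← Real.exp_nat_mul, ← Real.exp_add]
      congr 1; push_cast; ring

lemma aux_summable (F : GoodMap) (χ : ℝ) (x : ℤ → ℝ) (hx : x ∈ NUE F χ) (k : ℤ) :
    Summable (auxTerm F.f χ (fhatI k x)) := by
  have key : ∀ k : ℤ, Summable (auxTerm F.f χ (fhatI k x)) ↔
      Summable (auxTerm F.f χ (fhatI (k-1) x)) := by
    intro k
    have := aux_summable_shift F.f χ (fhatI k x)
      (aux_deriv_ne F _ (hx.1.1 _) (hx.2.1 _))
    rw [aux_fhatI_comp] at this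
    rwa [show -1 + k = k - 1 by ring] at this
  induction k using Int.induction_on with
  | zero =>
    have : fhatI 0 x = x := by funext n; simp [fhatI]
    rw [this]; exact aux_summable0 F χ x hx
  | succ i ih => rw [key]; simpa using ih
  | pred i ih => exact (key _).1 ih

lemma aux_u_pos (F : GoodMap) (χ : ℝ) (x : ℤ → ℝ) (hx : x ∈ NUE F χ) (k : ℤ) :
    0 < uPes F.f χ (fhatI k x) := by
  unfold uPes
  apply Real.sqrt_pos.2
  refine (aux_summable F χ x hx k).tsum_pos (fun n => ?_) 0 ?_
  · unfold auxTerm; positivity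
  · unfold auxTerm; rw [aux_dfhat_neg]; simp

lemma aux_Q_lower (F : GoodMap) (χ ε : ℝ) (hε : 0 < ε) (x : ℤ → ℝ) (t : ℝ) (ht0 : 0 < t)
    (ht1 : t ≤ 1) (ht : t ≤ Qtilde F χ ε x) :
    Real.exp (-(ε / 3)) * t ≤ Qeps F χ ε x := by
  set N := ⌈-(3 * Real.log t) / ε⌉₊ with hN
  have hl : Real.log t ≤ 0 := Real.log_nonpos ht0.le ht1
  have h1 : -(3 * Real.log t) / ε ≤ N := Nat.le_ceil _
  have h2 : (N:ℝ) < -(3 * Real.log t) / ε + 1 :=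
    Nat.ceil_lt_add_one (div_nonneg (by linarith) hε.le)
  rw [div_le_iff₀ hε] at h1
  have h2' : (N:ℝ) * ε < -(3 * Real.log t) + ε := by
    have := mul_lt_mul_of_pos_right h2 hε
    rwa [add_mul, div_mul_cancel₀ _ hε.ne', one_mul] at this
  have hle : Real.exp (-(ε * N) / 3) ≤ t := by
    rw [← Real.le_log_iff_exp_le ht0]; linarith
  have hge : Real.exp (-(ε / 3)) * t ≤ Real.exp (-(ε * N) / 3) := by
    calc Real.exp (-(ε / 3)) * t = Real.exp (-(ε / 3) + Real.log t) := by
          rw [Real.exp_add, Real.exp_log ht0]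
      _ ≤ _ := Real.exp_le_exp.2 (by linarith)
  refine hge.trans (le_csSup ⟨1, ?_⟩ ⟨⟨N, rfl⟩, hle.trans ht⟩)
  rintro q ⟨⟨n, rfl⟩, -⟩
  apply Real.exp_le_one_iff.2
  have : 0 ≤ ε * n := by positivity
  linarith

lemma aux_rho_pos (F : GoodMap) (hA : F.SatA) (χ : ℝ) (x : ℤ → ℝ) (hx : x ∈ NUE F χ) (k : ℤ) :
    0 < F.dS (x k) := by
  refine aux_dS_pos F hA _ (hx.1.1 _) (hx.2.1 _) ?_
  have := hx.1.2 (k+1)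
  rw [add_sub_cancel_right] at this
  rw [this]; exact hx.2.1 _

lemma aux_Q_pos (F : GoodMap) (hA : F.SatA) (χ ε : ℝ) (hε : 0 < ε) (x : ℤ → ℝ)
    (hx : x ∈ NUE F χ) (k : ℤ) : 0 < Qeps F χ ε (fhatI k x) := by
  have hu := aux_u_pos F χ x hx k
  have hu' := aux_u_pos F χ x hx (-1 + k)
  have hr : 0 < rho F (fhatI k x) := by
    unfold rho fhatI
    exact lt_min (aux_rho_pos F hA χ x hx _)
      (lt_min (aux_rho_pos F hA χ x hx _) (aux_rho_pos F hA χ x hx _))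
  have hQ : 0 < Qtilde F χ ε (fhatI k x) := by
    unfold Qtilde
    rw [aux_fhatI_comp]
    apply mul_pos (Real.rpow_pos_of_pos hε _)
    apply lt_min (Real.rpow_pos_of_pos hu _)
    exact mul_pos (Real.rpow_pos_of_pos hu' _) (Real.rpow_pos_of_pos hr _)
  have := aux_Q_lower F χ ε hε (fhatI k x) (min 1 (Qtilde F χ ε (fhatI k x)))
    (lt_min one_pos hQ) (min_le_left _ _) (min_le_right _ _)
  refine lt_of_lt_of_le ?_ this
  have := lt_min one_pos hQ
  positivity

lemma aux_Q_growth (F : GoodMap) (hA : F.SatA) (χ ε : ℝ) (hε : 0 < ε) (hε1 : ε < 1) (x : ℤ → ℝ)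
    (hx : x ∈ NUEstar F χ) :
    ∀ᶠ k : ℕ in atTop, Real.exp (-(ε / 3)) * (ε ^ (3 / F.β) * Real.exp (-(ε / 2 * (k + 1))))
      ≤ Qeps F χ ε (fhatI (-(k:ℤ)) x) := by
  obtain ⟨hN, ⟨-, -, -, hR⟩, -, hU⟩ := hx
  have hβ := F.hβ0
  have ha := F.ha
  obtain ⟨η, hη⟩ : ∃ η : ℝ, η = ε / 2 * (F.β / (84 * F.a)) := ⟨_, rfl⟩
  have hη0 : 0 < η := by rw [hη]; positivity
  have hηe : ε / 2 = η * (84 * F.a / F.β) := by rw [hη]; field_simp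
  have hd : ∀ᶠ k : ℕ in atTop, Real.exp (-(η * k)) ≤ F.dS (x (-(k:ℤ))) := by
    filter_upwards [hR.eventually (lt_mem_nhds (neg_lt_zero.2 hη0)), eventually_gt_atTop 0]
      with k hk hk0
    have hk0' : (0:ℝ) < k := by exact_mod_cast hk0
    rw [lt_div_iff₀ hk0'] at hk
    rw [← Real.le_log_iff_exp_le (aux_rho_pos F hA χ x hN _)]
    linarith
  have hu : ∀ᶠ k : ℕ in atTop, uPes F.f χ (fhatI (-(k:ℤ)) x) ≤ Real.exp (η * k) := by
    filter_upwards [hU.eventually (lt_mem_nhds (neg_lt_zero.2 hη0)), eventually_gt_atTop 0]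
      with k hk hk0
    have hk0' : (0:ℝ) < k := by exact_mod_cast hk0
    rw [div_neg, neg_lt_neg_iff, div_lt_iff₀ hk0'] at hk
    rw [← Real.log_le_iff_le_exp (aux_u_pos F χ x hN _)]
    linarith
  obtain ⟨K1, hK1⟩ := eventually_atTop.1 hd
  obtain ⟨K2, hK2⟩ := eventually_atTop.1 hu
  filter_upwards [eventually_ge_atTop (K1 + K2 + 1)] with k hk
  have hkk : (0:ℝ) ≤ k := Nat.cast_nonneg k
  apply aux_Q_lower F χ ε hε
  · positivity
  · apply mul_le_one₀ (Real.rpow_le_one hε.le hε1.le (by positivity)) (Real.exp_pos _).le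
    apply Real.exp_le_one_iff.2
    have : 0 ≤ ε / 2 * (k + 1) := by positivity
    linarith
  unfold Qtilde
  rw [aux_fhatI_comp]
  have hb : 0 ≤ F.β⁻¹ := by positivity
  apply mul_le_mul_of_nonneg_left _ (by positivity)
  have hu2 := hK2 (k+1) (by omega)
  have e1 : (-((k+1 : ℕ):ℤ)) = -1 + -(k:ℤ) := by push_cast; ring
  rw [e1] at hu2
  have hrho : Real.exp (-(η * (k+1))) ≤ rho F (fhatI (-(k:ℤ)) x) := by
    unfold rho fhatI
    refine le_min ?_ (le_min ?_ ?_)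
    · have := hK1 (k+1) (by omega)
      rw [e1] at this
      push_cast at this
      exact this
    · have := hK1 k (by omega)
      rw [zero_add]
      refine le_trans (Real.exp_le_exp.2 ?_) this
      nlinarith
    · have := hK1 (k-1) (by omega)
      have e2 : (-((k-1 : ℕ):ℤ)) = 1 + -(k:ℤ) := by omega
      rw [e2] at this
      refine le_trans (Real.exp_le_exp.2 ?_) this
      have e3 : ((k-1 : ℕ):ℝ) ≤ k := by exact_mod_cast Nat.sub_le _ _
      nlinarith
  apply le_min
  · refine le_trans ?_ (Real.rpow_le_rpow_of_nonpos (aux_u_pos F χ x hN _)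
      (hK2 k (by omega)) (by rw [neg_nonpos]; positivity))
    rw [← Real.exp_mul]
    apply Real.exp_le_exp.2
    rw [hηe]
    have : η * k * (24 / F.β) ≤ η * (84 * F.a / F.β) * (k + 1) := by
      calc η * k * (24 / F.β) ≤ η * (k + 1) * (84 * F.a / F.β) := by
            gcongr <;> linarith
        _ = _ := by ring
    linarith
  · have A := Real.rpow_le_rpow_of_nonpos (aux_u_pos F χ x hN _) hu2
      (show -(12 / F.β) ≤ 0 by rw [neg_nonpos]; positivity)
    have B := Real.rpow_le_rpow (Real.exp_pos _).le hrho
      (show 0 ≤ 72 * F.a / F.β by positivity)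
    rw [← Real.exp_mul] at A B
    refine le_trans ?_ (mul_le_mul A B (Real.exp_pos _).le
      (Real.rpow_nonneg (aux_u_pos F χ x hN _).le _))
    rw [← Real.exp_add]
    apply Real.exp_le_exp.2
    rw [hηe]
    push_cast
    have : η * (k+1) * (12 / F.β) ≤ η * (k + 1) * (12 * F.a / F.β) := by
      gcongr; linarith
    have e : η * (84 * F.a / F.β) * (k + 1) =
      η * (k + 1) * (12 * F.a / F.β) + η * (k + 1) * (72 * F.a / F.β) := by ring
    linarith

/-- The sequence whose backward minima define `q_ε`. -/
def auxH (F : GoodMap) (χ ε : ℝ) (x : ℤ → ℝ) (j : ℤ) : ℝ :=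
  Real.exp (-(ε * j)) * Qeps F χ ε (fhatI j x)

lemma aux_H_tendsto (F : GoodMap) (hA : F.SatA) (χ ε : ℝ) (hε : 0 < ε) (hε1 : ε < 1)
    (x : ℤ → ℝ) (hx : x ∈ NUEstar F χ) (C : ℝ) :
    ∃ J : ℤ, ∀ j ≤ J, C ≤ auxH F χ ε x j := by
  have hc : 0 < Real.exp (-(ε / 3)) * (ε ^ (3 / F.β) * Real.exp (-(ε/2))) := by positivity
  have ht : Tendsto (fun k : ℕ => (Real.exp (-(ε / 3)) * (ε ^ (3 / F.β) * Real.exp (-(ε/2)))) *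
      Real.exp ((ε/2) * (k:ℝ))) atTop atTop := by
    apply Tendsto.const_mul_atTop hc
    apply Real.tendsto_exp_atTop.comp
    exact Tendsto.const_mul_atTop (by positivity) tendsto_natCast_atTop_atTop
  obtain ⟨K, hK⟩ := eventually_atTop.1
    ((aux_Q_growth F hA χ ε hε hε1 x hx).and (ht.eventually_ge_atTop C))
  refine ⟨-(K:ℤ), fun j hj => ?_⟩
  obtain ⟨k, rfl⟩ : ∃ k : ℕ, j = -(k:ℤ) := ⟨(-j).toNat, by omega⟩
  obtain ⟨h1, h2⟩ := hK k (by omega)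
  refine h2.trans ?_
  unfold auxH
  refine le_trans (le_of_eq ?_) (mul_le_mul_of_nonneg_left h1 (Real.exp_pos _).le)
  have : Real.exp (-(ε / 2)) * Real.exp (ε / 2 * k) =
      Real.exp (-(ε * ((-(k:ℤ) : ℤ) : ℝ))) * Real.exp (-(ε / 2 * (k + 1))) := by
    rw [← Real.exp_add, ← Real.exp_add]; congr 1; push_cast; ring
  linear_combination (Real.exp (-(ε / 3)) * ε ^ (3 / F.β)) * this

lemma aux_min_exists (h : ℤ → ℝ) (hh : ∀ C, ∃ J : ℤ, ∀ j ≤ J, C ≤ h j) (n : ℤ) :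
    ∃ m ≤ n, ∀ j ≤ n, h m ≤ h j := by
  obtain ⟨J, hJ⟩ := hh (h n)
  obtain ⟨m, hm, hmin⟩ := Finset.exists_min_image (Finset.Icc (min J n) n) h
    ⟨n, by simp⟩
  rw [Finset.mem_Icc] at hm
  refine ⟨m, hm.2, fun j hj => ?_⟩
  by_cases hjJ : j ≤ J
  · exact (hmin n (by simp)).trans (hJ j hjJ)
  · apply hmin
    rw [Finset.mem_Icc]
    omega

lemma aux_delta_lt (ε : ℝ) (hε : 0 < ε) : deltaEps ε < ε := by
  unfold deltaEps
  rw [← Real.lt_log_iff_exp_lt hε]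
  have := Int.lt_floor_add_one (Real.log (1 / ε) / ε)
  rw [div_lt_iff₀ hε] at this
  rw [one_div, Real.log_inv] at this
  push_cast
  rw [one_div, Real.log_inv]
  linarith

lemma aux_term_eq (F : GoodMap) (χ ε : ℝ) (x : ℤ → ℝ) (n m : ℤ) (hm : m ≤ 0) :
    Real.exp (ε * |(m:ℝ)|) * Qeps F χ ε (fhatI m (fhatI n x)) =
      Real.exp (ε * n) * auxH F χ ε x (m + n) := by
  have : (m:ℝ) ≤ 0 := by exact_mod_cast hm
  rw [aux_fhatI_comp, abs_of_nonpos this, auxH, ← mul_assoc, ← Real.exp_add]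
  congr 2; push_cast; ring

lemma aux_isLeast (F : GoodMap) (χ ε : ℝ) (x : ℤ → ℝ) (n m : ℤ) (hm : m ≤ n)
    (hmin : ∀ j ≤ n, auxH F χ ε x m ≤ auxH F χ ε x j) :
    sInf {t : ℝ | ∃ m' : ℤ, m' ≤ 0 ∧
      t = Real.exp (ε * |(m':ℝ)|) * Qeps F χ ε (fhatI m' (fhatI n x))} =
    Real.exp (ε * n) * auxH F χ ε x m := by
  apply IsLeast.csInf_eq
  constructor
  · refine ⟨m - n, by omega, ?_⟩
    rw [aux_term_eq _ _ _ _ _ _ (by omega), sub_add_cancel]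
  · rintro t ⟨m', hm', rfl⟩
    rw [aux_term_eq _ _ _ _ _ _ hm']
    exact mul_le_mul_of_nonneg_left (hmin _ (by omega)) (Real.exp_pos _).le

/-- properties of the parameter `q_ε` (Lemma 2.9). -/
theorem qeps_lemma (F : GoodMap) (hA : F.SatA) (χ : ℝ) (hχ : 0 < χ) :
    ∃ ε₀ > 0, ∀ ε : ℝ, 0 < ε → ε < ε₀ →
      ∀ x ∈ NUEstar F χ,
        (∀ n : ℤ,
          (∃ m : ℤ, m ≤ 0 ∧
            sInf {t : ℝ | ∃ m' : ℤ, m' ≤ 0 ∧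
                t = Real.exp (ε * |(m':ℝ)|) * Qeps F χ ε (fhatI m' (fhatI n x))} =
              Real.exp (ε * |(m:ℝ)|) * Qeps F χ ε (fhatI m (fhatI n x))) ∧
          0 < qeps F χ ε (fhatI n x) ∧
          qeps F χ ε (fhatI n x) < ε * Qeps F χ ε (fhatI n x)) ∧
        (∀ n : ℤ, qeps F χ ε (fhatI n x) =
          min (Real.exp ε * qeps F χ ε (fhatI (n - 1) x))
            (deltaEps ε * Qeps F χ ε (fhatI n x))) := by
  refine ⟨1, one_pos, fun ε hε hε1 x hx => ?_⟩
  have hδ : 0 < deltaEps ε := Real.exp_pos _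
  have hQ := fun k => aux_Q_pos F hA χ ε hε x hx.1 k
  have hH : ∀ k, 0 < auxH F χ ε x k := fun k => mul_pos (Real.exp_pos _) (hQ k)
  have hex := aux_min_exists (auxH F χ ε x) (aux_H_tendsto F hA χ ε hε hε1 x hx)
  have hHn : ∀ n : ℤ, Real.exp (ε * n) * auxH F χ ε x n = Qeps F χ ε (fhatI n x) := by
    intro n
    rw [auxH, ← mul_assoc, ← Real.exp_add]; simp
  choose μ hμ hmin using hex
  have hq : ∀ n, qeps F χ ε (fhatI n x) =
      deltaEps ε * (Real.exp (ε * n) * auxH F χ ε x (μ n)) := by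
    intro n
    rw [qeps, aux_isLeast F χ ε x n (μ n) (hμ n) (hmin n)]
  refine ⟨fun n => ⟨⟨μ n - n, by have := hμ n; omega, ?_⟩, ?_, ?_⟩, fun n => ?_⟩
  · rw [aux_isLeast F χ ε x n (μ n) (hμ n) (hmin n),
      aux_term_eq _ _ _ _ _ _ (by have := hμ n; omega), sub_add_cancel]
  · rw [hq]
    exact mul_pos hδ (mul_pos (Real.exp_pos _) (hH _))
  · rw [hq]
    calc _ ≤ deltaEps ε * (Real.exp (ε * n) * auxH F χ ε x n) := by
          gcongr; exact hmin n n le_rfl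
      _ < _ := by
          rw [hHn]; exact mul_lt_mul_of_pos_right (aux_delta_lt ε hε) (hQ n)
  · have hm : auxH F χ ε x (μ n) = min (auxH F χ ε x (μ (n-1))) (auxH F χ ε x n) := by
      apply le_antisymm
      · exact le_min (hmin n _ (by have := hμ (n-1); omega)) (hmin n n le_rfl)
      · rcases (hμ n).lt_or_eq with h | h
        · exact (min_le_left _ _).trans (hmin (n-1) _ (by omega))
        · rw [h]; exact min_le_right _ _
    rw [hq, hq, ← hHn, hm]
    have e : Real.exp (ε * n) = Real.exp ε * Real.exp (ε * ((n - 1 : ℤ) : ℝ)) := by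
      rw [← Real.exp_add]; congr 1; push_cast; ring
    rw [mul_min_of_nonneg _ _ (Real.exp_pos _).le, mul_min_of_nonneg _ _ hδ.le]
    congr 1
    rw [e]; ring

end OneDim
end
end

section
/- Assume f satisfies (A1)–(A3) and fix χ > 0. There is ε₀ > 0 such that for all 0 < ε < ε₀: every weak ε-gpo {Ψ_{x̂_n}^{p_n}}_{n∈ℤ} shadows a unique element of M̂, i.e. there is exactly one x̂ ∈ M̂ with ϑ_n[x̂] ∈ Ψ_{x̂_n}([−p_n, p_n]) for all n ∈ ℤ. -/
open Real MeasureTheory Filter Topology Metric Set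

noncomputable section

namespace OneDim

/-! ### Helper lemmas -/

/-- Abstract backward-contraction lemma. -/
lemma aux_exists_orbit (c U p : ℤ → ℝ) (G : ℤ → ℝ → ℝ) (θ : ℝ) (hθ0 : 0 ≤ θ) (hθ1 : θ < 1)
    (hU : ∀ n, 1 ≤ U n) (hp : ∀ n, 0 < p n) (hp1 : ∀ n, p n ≤ 1)
    (hmap : ∀ n z, U (n+1) * |z - c (n+1)| ≤ p (n+1) → U n * |G n z - c n| ≤ p n)
    (hlip : ∀ n z w, U (n+1) * |z - c (n+1)| ≤ p (n+1) → U (n+1) * |w - c (n+1)| ≤ p (n+1) →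
      U n * |G n z - G n w| ≤ θ * (U (n+1) * |z - w|)) :
    ∃ y : ℤ → ℝ, ∀ n, U n * |y n - c n| ≤ p n ∧ y n = G n (y (n+1)) := by
  let D : ℕ → ℤ → ℝ := fun k => Nat.rec (motive := fun _ => ℤ → ℝ) c
    (fun _ d n => G n (d (n+1))) k
  have D0 : ∀ n, D 0 n = c n := fun n => rfl
  have DS : ∀ k n, D (k+1) n = G n (D k (n+1)) := fun k n => rfl
  have hin : ∀ k n, U n * |D k n - c n| ≤ p n := by
    intro k
    induction k with
    | zero => intro n; rw [D0]; simp [(hp n).le]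
    | succ k ih => intro n; rw [DS]; exact hmap n _ (ih (n+1))
  have hstep : ∀ k n, U n * |D k n - D (k+1) n| ≤ θ ^ k := by
    intro k
    induction k with
    | zero =>
      intro n
      rw [D0, abs_sub_comm, pow_zero]
      exact (hin 1 n).trans (hp1 n)
    | succ k ih =>
      intro n
      rw [DS k, DS (k+1), pow_succ']
      exact (hlip n _ _ (hin k (n+1)) (hin (k+1) (n+1))).trans
        (mul_le_mul_of_nonneg_left (ih (n+1)) hθ0)
  have hc : ∀ n, CauchySeq (fun k => D k n) := by
    intro n
    refine cauchySeq_of_le_geometric θ 1 hθ1 (fun k => ?_)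
    rw [Real.dist_eq, one_mul]
    refine le_trans ?_ (hstep k n)
    nlinarith [hU n, abs_nonneg (D k n - D (k+1) n)]
  choose y hy using fun n => cauchySeq_tendsto_of_complete (hc n)
  have hyin : ∀ n, U n * |y n - c n| ≤ p n := by
    intro n
    have h : Tendsto (fun k => U n * |D k n - c n|) atTop (𝓝 (U n * |y n - c n|)) :=
      (((hy n).sub_const _).abs).const_mul _
    exact le_of_tendsto' h (fun k => hin k n)
  refine ⟨y, fun n => ⟨hyin n, ?_⟩⟩
  have h1 : Tendsto (fun k => D (k+1) n) atTop (𝓝 (y n)) :=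
    (hy n).comp (tendsto_add_atTop_nat 1)
  have h2 : Tendsto (fun k => D (k+1) n) atTop (𝓝 (G n (y (n+1)))) := by
    rw [tendsto_iff_dist_tendsto_zero]
    have h3 : Tendsto (fun k => θ * (U (n+1) * |D k (n+1) - y (n+1)|)) atTop (𝓝 0) := by
      have := ((((hy (n+1)).sub_const (y (n+1))).abs).const_mul (U (n+1))).const_mul θ
      simpa using this
    refine squeeze_zero (fun _ => dist_nonneg) (fun k => ?_) h3
    rw [Real.dist_eq, DS]
    refine le_trans ?_ (hlip n _ _ (hin _ _) (hyin _))
    nlinarith [hU n, abs_nonneg (G n (D k (n+1)) - G n (y (n+1)))]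
  exact tendsto_nhds_unique h1 h2

/-- Abstract uniqueness. -/
lemma aux_unique_orbit (c U p : ℤ → ℝ) (G : ℤ → ℝ → ℝ) (θ : ℝ) (hθ0 : 0 ≤ θ) (hθ1 : θ < 1)
    (hU : ∀ n, 1 ≤ U n) (hp1 : ∀ n, p n ≤ 1)
    (hlip : ∀ n z w, U (n+1) * |z - c (n+1)| ≤ p (n+1) → U (n+1) * |w - c (n+1)| ≤ p (n+1) →
      U n * |G n z - G n w| ≤ θ * (U (n+1) * |z - w|))
    (x y : ℤ → ℝ) (hx : ∀ n, U n * |x n - c n| ≤ p n ∧ x n = G n (x (n+1)))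
    (hy : ∀ n, U n * |y n - c n| ≤ p n ∧ y n = G n (y (n+1))) : x = y := by
  have h : ∀ (k : ℕ) (n : ℤ), U n * |x n - y n| ≤ θ ^ k * 2 := by
    intro k
    induction k with
    | zero =>
      intro n
      have h1 : |x n - y n| ≤ |x n - c n| + |y n - c n| := by
        rw [abs_sub_comm (y n)]; exact abs_sub_le _ _ _
      nlinarith [hU n, (hx n).1, (hy n).1, hp1 n]
    | succ k ih =>
      intro n
      calc U n * |x n - y n| = U n * |G n (x (n+1)) - G n (y (n+1))| := by
            rw [← (hx n).2, ← (hy n).2]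
        _ ≤ θ * (U (n+1) * |x (n+1) - y (n+1)|) := hlip n _ _ (hx _).1 (hy _).1
        _ ≤ θ * (θ ^ k * 2) := mul_le_mul_of_nonneg_left (ih (n+1)) hθ0
        _ = _ := by ring
  funext n
  have h0 : Tendsto (fun k : ℕ => θ ^ k * 2) atTop (𝓝 0) := by
    simpa using (tendsto_pow_atTop_nhds_zero_of_lt_one hθ0 hθ1).mul_const 2
  have h1 : U n * |x n - y n| ≤ 0 := ge_of_tendsto' h0 (fun k => h k n)
  have h2 : |x n - y n| ≤ 0 := by nlinarith [hU n, abs_nonneg (x n - y n)]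
  exact sub_eq_zero.1 (abs_nonpos_iff.1 h2)

lemma aux_dfhat_succ (f : ℝ → ℝ) (x : ℤ → ℝ) (n : ℕ) :
    dfhat f x (-((n+1 : ℕ):ℤ)) = (deriv f (x (-1)))⁻¹ * dfhat f (fhatI (-1) x) (-(n:ℤ)) := by
  rw [aux_dfhat_neg, aux_dfhat_neg, Finset.prod_range_succ', mul_inv, mul_comm]
  congr 2
  refine Finset.prod_congr rfl (fun j _ => ?_)
  unfold fhatI
  congr 2
  push_cast
  ring

lemma aux_u_facts (f : ℝ → ℝ) (χ : ℝ) (x : ℤ → ℝ) (hu : uPes f χ x ≠ 0) :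
    1 ≤ uPes f χ x ∧
      Real.exp χ * (uPes f χ (fhatI (-1) x)) * |(deriv f (x (-1)))⁻¹| ≤ uPes f χ x := by
  set b : (ℤ → ℝ) → ℕ → ℝ :=
    fun x n => Real.exp (2 * (n:ℝ) * χ) * (dfhat f x (-(n:ℤ))) ^ 2 with hb
  have hu' : ∀ x, uPes f χ x = Real.sqrt (∑' n, b x n) := fun x => rfl
  have hbn : ∀ x n, 0 ≤ b x n := fun x n => by simp only [hb]; positivity
  have hs : Summable (b x) := by
    by_contra h
    apply hu
    rw [hu', tsum_eq_zero_of_not_summable h, Real.sqrt_zero]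
  have h0 : b x 0 = 1 := by simp [hb, dfhat]
  have hS : ∀ n, b x (n+1) = (Real.exp χ * (deriv f (x (-1)))⁻¹)^2 * b (fhatI (-1) x) n := by
    intro n
    simp only [hb]
    rw [aux_dfhat_succ]
    have : Real.exp (2 * ((n+1 : ℕ):ℝ) * χ) = Real.exp χ ^ 2 * Real.exp (2 * (n:ℝ) * χ) := by
      rw [← Real.exp_nat_mul, ← Real.exp_add]
      congr 1; push_cast; ring
    rw [this]; ring
  have hsum : ∑' n, b x n = 1 + (Real.exp χ * (deriv f (x (-1)))⁻¹)^2 *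
      ∑' n, b (fhatI (-1) x) n := by
    rw [hs.tsum_eq_zero_add, h0, ← tsum_mul_left]
    congr 1
    exact tsum_congr hS
  have hWn : 0 ≤ ∑' n, b (fhatI (-1) x) n := tsum_nonneg (hbn _)
  constructor
  · rw [hu', hsum]
    apply Real.one_le_sqrt.2
    have := mul_nonneg (sq_nonneg (Real.exp χ * (deriv f (x (-1)))⁻¹)) hWn
    linarith
  · rw [hu' x, hsum]
    apply Real.le_sqrt_of_sq_le
    rw [mul_pow, mul_pow, sq_abs, hu', Real.sq_sqrt hWn]
    nlinarith

lemma aux_dS_le (F : GoodMap) (x : ℝ) (hx : x ∈ Mset) : F.dS x ≤ 1/2 := by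
  unfold GoodMap.dS
  rcases F.S.eq_empty_or_nonempty with h | ⟨s, hs⟩
  · rw [h, Metric.infDist_empty]; norm_num
  · have hsM : s ∈ Mset := by
      rcases hs with h | h
      · exact h.1.1
      · exact F.hD h
    refine (Metric.infDist_le_dist_of_mem hs).trans ?_
    rw [Real.dist_eq, abs_le]
    unfold Mset at *
    constructor <;> linarith [hx.1, hx.2, hsM.1, hsM.2]

lemma aux_chart (F : GoodMap) (χ ε : ℝ) (hε : 0 < ε) (hε1 : ε ≤ 1) (c : Chart)
    (hc : IsChart F χ ε c) :
    1 ≤ uPes F.f χ c.x ∧ 1 ≤ uPes F.f χ (fhatI (-1) c.x) ∧ 0 < rho F c.x ∧ rho F c.x ≤ 1/2 ∧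
    c.p ≤ ε ∧ c.p ≤ ε * rho F c.x ^ F.a ∧ uPes F.f χ c.x * c.p ≤ 1 ∧
    uPes F.f χ (fhatI (-1) c.x) * c.p ^ F.β ≤ ε ∧
    Real.exp χ * (uPes F.f χ (fhatI (-1) c.x)) * |(deriv F.f (c.x (-1)))⁻¹| ≤ uPes F.f χ c.x := by
  obtain ⟨hN, hp, hpQ⟩ := hc
  have hβ0 := F.hβ0
  have hβ1 := F.hβ1
  have ha := F.ha
  have hpQt : c.p ≤ Qtilde F χ ε c.x := by
    unfold Qeps at hpQ
    rcases Set.eq_empty_or_nonempty {q | q ∈ Ieps ε ∧ q ≤ Qtilde F χ ε c.x} with h | h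
    · rw [h, Real.sSup_empty] at hpQ; linarith
    · exact hpQ.trans (csSup_le h (fun q hq => hq.2))
  set U := uPes F.f χ c.x with hUdef
  set W := uPes F.f χ (fhatI (-1) c.x) with hWdef
  set ρ := rho F c.x with hρdef
  unfold Qtilde at hpQt
  rw [← hUdef, ← hWdef, ← hρdef] at hpQt
  have hE0 : 0 < ε ^ (3 / F.β) := Real.rpow_pos_of_pos hε _
  have h1 : c.p ≤ ε ^ (3 / F.β) * U ^ (-(24 / F.β)) :=
    hpQt.trans (mul_le_mul_of_nonneg_left (min_le_left _ _) hE0.le)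
  have h2 : c.p ≤ ε ^ (3 / F.β) * (W ^ (-(12 / F.β)) * ρ ^ (72 * F.a / F.β)) :=
    hpQt.trans (mul_le_mul_of_nonneg_left (min_le_right _ _) hE0.le)
  have hU0 : U ≠ 0 := by
    intro h
    rw [h, Real.zero_rpow (by simp [hβ0.ne']), mul_zero] at h1
    linarith
  have hW0 : W ≠ 0 := by
    intro h
    rw [h, Real.zero_rpow (by simp [hβ0.ne']), zero_mul, mul_zero] at h2
    linarith
  have hρ0 : ρ ≠ 0 := by
    intro h
    rw [h, Real.zero_rpow (by positivity), mul_zero, mul_zero] at h2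
    linarith
  obtain ⟨hU1, hUW⟩ := aux_u_facts F.f χ c.x hU0
  obtain ⟨hW1, -⟩ := aux_u_facts F.f χ (fhatI (-1) c.x) hW0
  rw [← hUdef] at hU1 hUW
  rw [← hWdef] at hW1 hUW
  have hρn : 0 ≤ ρ := le_min Metric.infDist_nonneg (le_min Metric.infDist_nonneg Metric.infDist_nonneg)
  have hρp : 0 < ρ := lt_of_le_of_ne hρn (Ne.symm hρ0)
  have hρh : ρ ≤ 1/2 := (min_le_left _ _).trans (aux_dS_le F _ (hN.1.1 _))
  have hib : 1 ≤ 1 / F.β := by rw [le_div_iff₀ hβ0]; linarith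
  have e3 : 3 / F.β = 3 * (1 / F.β) := by ring
  have e24 : 24 / F.β = 24 * (1 / F.β) := by ring
  have e12 : 12 / F.β = 12 * (1 / F.β) := by ring
  have hEle : ε ^ (3 / F.β) ≤ ε := by
    conv_rhs => rw [← Real.rpow_one ε]
    exact Real.rpow_le_rpow_of_exponent_ge hε hε1 (by linarith)
  have hUle : U ^ (-(24 / F.β)) ≤ U⁻¹ := by
    rw [← Real.rpow_neg_one U]
    exact Real.rpow_le_rpow_of_exponent_le hU1 (by linarith)
  have hUi1 : U⁻¹ ≤ 1 := inv_le_one_of_one_le₀ hU1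
  have hWle1 : W ^ (-(12 / F.β)) ≤ 1 := Real.rpow_le_one_of_one_le_of_nonpos hW1 (by linarith)
  have hWn : 0 ≤ W ^ (-(12 / F.β)) := Real.rpow_nonneg (by linarith) _
  have hρle : ρ ^ (72 * F.a / F.β) ≤ ρ ^ F.a := by
    apply Real.rpow_le_rpow_of_exponent_ge hρp (by linarith)
    have : 72 * F.a / F.β = F.a * (72 * (1 / F.β)) := by ring
    rw [this]; nlinarith
  have hρle1 : ρ ^ (72 * F.a / F.β) ≤ 1 :=
    Real.rpow_le_one hρn (by linarith) (by positivity)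
  have hρnn : 0 ≤ ρ ^ (72 * F.a / F.β) := Real.rpow_nonneg hρn _
  have hpU : c.p ≤ ε * U⁻¹ := h1.trans (mul_le_mul hEle hUle (by positivity) hε.le)
  refine ⟨hU1, hW1, hρp, hρh, ?_, ?_, ?_, ?_, hUW⟩
  · nlinarith
  · refine h2.trans (mul_le_mul hEle ?_ (by positivity) hε.le)
    nlinarith
  · have : U * (ε * U⁻¹) = ε := by field_simp
    nlinarith
  · have h3 : c.p ≤ (ε * W⁻¹) ^ (1 / F.β) := by
      rw [Real.mul_rpow hε.le (by positivity)]
      refine h2.trans (mul_le_mul ?_ ?_ (by positivity) (by positivity))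
      · exact Real.rpow_le_rpow_of_exponent_ge hε hε1 (by linarith)
      · have : W ^ (-(12 / F.β)) ≤ W⁻¹ ^ (1 / F.β) := by
          rw [Real.inv_rpow (by linarith), ← Real.rpow_neg (by linarith)]
          exact Real.rpow_le_rpow_of_exponent_le hW1 (by linarith)
        nlinarith
    have h4 : c.p ^ F.β ≤ ε * W⁻¹ := by
      have := Real.rpow_le_rpow hp.le h3 hβ0.le
      rwa [← Real.rpow_mul (by positivity), one_div, inv_mul_cancel₀ hβ0.ne', Real.rpow_one] at this
    have : W * (ε * W⁻¹) = ε := by field_simp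
    nlinarith

lemma aux_fx (F : GoodMap) (χ : ℝ) (x : ℤ → ℝ) (hx : x ∈ NUE F χ) (n : ℤ) :
    F.f (x n) = x (n+1) := by
  have h := hx.1.2 (n+1)
  rwa [add_sub_cancel_right] at h

lemma aux_fxS (F : GoodMap) (χ : ℝ) (x : ℤ → ℝ) (hx : x ∈ NUE F χ) (n : ℤ) :
    F.f (x n) ∉ F.S := by
  rw [aux_fx F χ x hx]; exact hx.2.1 (n+1)

/-- Facts about `f` near the centre of a chart. -/
lemma aux_chart_ball (F : GoodMap) (hA : F.SatA) (χ ε : ℝ) (hε : 0 < ε) (hε1 : ε ≤ 1) (c : Chart)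
    (hc : IsChart F χ ε c) :
    ∃ R, c.p < R ∧ Set.InjOn F.f (Metric.ball (c.x 0) R) ∧
      ContinuousOn F.f (Metric.ball (c.x 0) R) ∧
      ∀ y z, |y - c.x 0| ≤ c.p → |z - c.x 0| ≤ c.p → |z - y| ≤ c.p → |F.f z - F.f y| ≤ ε := by
  obtain ⟨hU, hW, hρ, hρh, hpε, hpρ, -, -, -⟩ := aux_chart F χ ε hε hε1 c hc
  obtain ⟨⟨hr, hr1⟩, ⟨hinj, hdiff, -⟩, ⟨hdf, -⟩, -⟩ := 
    hA (c.x 0) (hc.1.1.1 0) (hc.1.2.1 0) (aux_fxS F χ c.x hc.1 0)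
  have ha := F.ha
  have hfx : F.f (c.x 0) = c.x 1 := aux_fx F χ c.x hc.1 0
  rw [hfx] at hr
  have hd0 : rho F c.x ≤ F.dS (c.x 0) := (min_le_right _ _).trans (min_le_left _ _)
  have hd1 : rho F c.x ≤ F.dS (c.x 1) := (min_le_right _ _).trans (min_le_right _ _)
  have hρa : 0 < rho F c.x ^ F.a := Real.rpow_pos_of_pos hρ _
  have hρr : rho F c.x ^ F.a < F.r (c.x 0) := by
    refine lt_of_le_of_lt (le_min ?_ ?_) hr
    · exact Real.rpow_le_rpow hρ.le hd0 (by linarith)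
    · exact Real.rpow_le_rpow hρ.le hd1 (by linarith)
  have hpr : c.p < F.r (c.x 0) := by nlinarith
  refine ⟨2 * F.r (c.x 0), by linarith, hinj,
    fun y hy => (hdiff y hy).continuousAt.continuousWithinAt, ?_⟩
  intro y z hy hz hzy
  have hyb : y ∈ Metric.ball (c.x 0) (2 * F.r (c.x 0)) := by
    rw [Metric.mem_ball, Real.dist_eq]; linarith
  have hzb : z ∈ Metric.ball (c.x 0) (2 * F.r (c.x 0)) := by
    rw [Metric.mem_ball, Real.dist_eq]; linarith
  have hL := (convex_ball (c.x 0) (2 * F.r (c.x 0))).norm_image_sub_le_of_norm_deriv_le hdiff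
    (fun y hy => (hdf y hy).2) hyb hzb
  rw [Real.norm_eq_abs, Real.norm_eq_abs] at hL
  refine hL.trans ?_
  have h1 : F.dS (c.x 0) ^ (-F.a) ≤ (rho F c.x ^ F.a)⁻¹ := by
    rw [← Real.rpow_neg hρ.le]
    exact Real.rpow_le_rpow_of_nonpos hρ hd0 (by linarith)
  calc F.dS (c.x 0) ^ (-F.a) * |z - y| ≤ (rho F c.x ^ F.a)⁻¹ * (ε * rho F c.x ^ F.a) :=
        mul_le_mul h1 (hzy.trans hpρ) (abs_nonneg _) (by positivity)
    _ = ε := by field_simp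

set_option maxHeartbeats 1000000 in
/-- Contraction of the inverse branch along a weak edge. -/
lemma aux_edge (F : GoodMap) (hA : F.SatA) (χ ε : ℝ) (hε : 0 < ε) (hε1 : ε ≤ 1)
    (hθ : (1 + ε) * (Real.exp (-χ) + F.K * ε) * Real.exp ε + ε ≤ 1)
    (v w : Chart) (h : WeakEdge F χ ε v w) :
    (∀ z z', uPes F.f χ w.x * |z - w.x 0| ≤ w.p → uPes F.f χ w.x * |z' - w.x 0| ≤ w.p →
      uPes F.f χ v.x * |F.g (w.x (-1)) z - F.g (w.x (-1)) z'| ≤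
        (1 + ε) * (Real.exp (-χ) + F.K * ε) * (uPes F.f χ w.x * |z - z'|)) ∧
    (∀ z, uPes F.f χ w.x * |z - w.x 0| ≤ w.p →
      uPes F.f χ v.x * |F.g (w.x (-1)) z - v.x 0| ≤ v.p) ∧
    (∀ z, uPes F.f χ w.x * |z - w.x 0| ≤ w.p → F.f (F.g (w.x (-1)) z) = z) := by
  obtain ⟨hv, hw, ⟨-, -, hov⟩, hpq⟩ := h
  obtain ⟨hU, hW, hρ, hρh, hpε, hpρ, hUp, hWp, hUW⟩ := aux_chart F χ ε hε hε1 w hw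
  obtain ⟨hV, -, -, -, hqε, -, hVq, -, -⟩ := aux_chart F χ ε hε hε1 v hv
  obtain ⟨⟨hr, hr1⟩, ⟨-, hfd, hgx, hfg, -, hgd⟩, -, -, hK⟩ :=
    hA (w.x (-1)) (hw.1.1.1 (-1)) (hw.1.2.1 (-1)) (aux_fxS F χ w.x hw.1 (-1))
  have hfx : F.f (w.x (-1)) = w.x 0 := aux_fx F χ w.x hw.1 (-1)
  rw [hfx] at hr hgx hfg hgd hK
  have ha := F.ha
  have hKp := F.hK
  have hp := hw.2.1
  have hq := hv.2.1
  simp only at hov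
  have hx1 : fhatI (-1) w.x 0 = w.x (-1) := by simp [fhatI]
  rw [hx1] at hov
  set U := uPes F.f χ w.x with hUdef
  set W := uPes F.f χ (fhatI (-1) w.x) with hWdef
  set V := uPes F.f χ v.x with hVdef
  set p := w.p
  set q := v.p
  set r := F.r (w.x (-1))
  set G := F.g (w.x (-1))
  have hd0 : rho F w.x ≤ F.dS (w.x 0) := (min_le_right _ _).trans (min_le_left _ _)
  have hd1 : rho F w.x ≤ F.dS (w.x (-1)) := min_le_left _ _
  have hρa : 0 < rho F w.x ^ F.a := Real.rpow_pos_of_pos hρ _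
  have hρr : rho F w.x ^ F.a < r := by
    refine lt_of_le_of_lt (le_min ?_ ?_) hr
    · exact Real.rpow_le_rpow hρ.le hd1 (by linarith)
    · exact Real.rpow_le_rpow hρ.le hd0 (by linarith)
  have hpr : p < r := by nlinarith
  have hr0 : 0 < r := by linarith
  have hsub : ∀ z, U * |z - w.x 0| ≤ p → z ∈ Metric.closedBall (w.x 0) p := by
    intro z hz
    rw [Metric.mem_closedBall, Real.dist_eq]
    nlinarith [abs_nonneg (z - w.x 0)]
  have hsub2 : ∀ z ∈ Metric.closedBall (w.x 0) p, z ∈ Metric.ball (w.x 0) (2 * r) := by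
    intro z hz
    exact Metric.closedBall_subset_ball (by linarith) hz
  have hc : w.x 0 ∈ Metric.ball (w.x 0) (2 * r) := Metric.mem_ball_self (by linarith)
  -- derivative of `G` at the centre
  have hg0 : deriv G (w.x 0) = (deriv F.f (w.x (-1)))⁻¹ := by
    have h1 : HasDerivAt G (deriv G (w.x 0)) (w.x 0) := (hgd _ hc).hasDerivAt
    have h2 : HasDerivAt F.f (deriv F.f (w.x (-1))) (G (w.x 0)) := by
      rw [hgx]; exact (hfd _ (Metric.mem_ball_self (by linarith))).hasDerivAt
    have h3 := h2.comp (w.x 0) h1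
    have h4 : HasDerivAt (F.f ∘ G) 1 (w.x 0) := by
      refine (hasDerivAt_id (w.x 0)).congr_of_eventuallyEq ?_
      filter_upwards [Metric.ball_mem_nhds (w.x 0) (show 0 < 2 * r by linarith)] with z hz
      exact hfg z hz
    have h5 := h3.unique h4
    exact eq_inv_of_mul_eq_one_right h5
  have hgb : ∀ z ∈ Metric.closedBall (w.x 0) p,
      ‖deriv G z‖ ≤ |(deriv F.f (w.x (-1)))⁻¹| + F.K * p ^ F.β := by
    intro z hz
    have h1 := hK z (hsub2 z hz) (w.x 0) hc
    rw [hg0] at h1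
    have h2 : |z - w.x 0| ^ F.β ≤ p ^ F.β :=
      Real.rpow_le_rpow (abs_nonneg _) (by rwa [Metric.mem_closedBall, Real.dist_eq] at hz) F.hβ0.le
    have h3 := abs_sub_abs_le_abs_sub (deriv G z) (deriv F.f (w.x (-1)))⁻¹
    rw [Real.norm_eq_abs]
    have h4 := mul_le_mul_of_nonneg_left h2 (show 0 ≤ F.K by linarith)
    linarith
  have hL : ∀ z z', z ∈ Metric.closedBall (w.x 0) p → z' ∈ Metric.closedBall (w.x 0) p →
      |G z - G z'| ≤ (|(deriv F.f (w.x (-1)))⁻¹| + F.K * p ^ F.β) * |z - z'| := by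
    intro z z' hz hz'
    exact (convex_closedBall (w.x 0) p).norm_image_sub_le_of_norm_deriv_le
      (fun y hy => hgd y (hsub2 y hy)) hgb hz' hz
  have hWd : W * |(deriv F.f (w.x (-1)))⁻¹| ≤ Real.exp (-χ) * U := by
    have : Real.exp (-χ) * (Real.exp χ * W * |(deriv F.f (w.x (-1)))⁻¹|) =
        W * |(deriv F.f (w.x (-1)))⁻¹| := by
      rw [← mul_assoc, ← mul_assoc, ← Real.exp_add]; simp
    rw [← this]
    exact mul_le_mul_of_nonneg_left hUW (Real.exp_pos _).le
  have hWc : W * (|(deriv F.f (w.x (-1)))⁻¹| + F.K * p ^ F.β) ≤ (Real.exp (-χ) + F.K * ε) * U := by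
    have h1 : W * (F.K * p ^ F.β) ≤ F.K * ε := by
      have h0 := mul_le_mul_of_nonneg_left hWp (show 0 ≤ F.K by linarith)
      linarith
    have h2 : F.K * ε ≤ F.K * ε * U := le_mul_of_one_le_right (by positivity) hU
    rw [mul_add, add_mul]
    linarith
  -- overlap estimates
  have hq1 : q ≤ 1 := by linarith
  have hVq8 : V * (q * q) ^ 4 ≤ q * ε := by
    have h1 : V * (q * q) ^ 4 = (V * q) * (q ^ 6 * q) := by ring
    have h2 : q ^ 6 ≤ q := by simpa using pow_le_pow_of_le_one hq.le hq1 (show 1 ≤ 6 by norm_num)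
    rw [h1]
    have h3 : q ^ 6 * q ≤ ε * q := mul_le_mul_of_nonneg_right (h2.trans hqε) hq.le
    have h4 : 0 ≤ q ^ 6 * q := by positivity
    have h5 := mul_le_mul_of_nonneg_right hVq h4
    linarith
  have hov1 : |w.x (-1) - v.x 0| ≤ (q * q) ^ 4 := by
    linarith [abs_nonneg (W⁻¹ - V⁻¹)]
  have hov2 : |W⁻¹ - V⁻¹| ≤ (q * q) ^ 4 := by
    linarith [abs_nonneg (w.x (-1) - v.x 0)]
  have hVW : V ≤ (1 + ε) * W := by
    have h1 : W⁻¹ ≤ V⁻¹ + (q * q) ^ 4 := by linarith [le_abs_self (W⁻¹ - V⁻¹)]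
    have h2 : V * W⁻¹ ≤ 1 + ε := by
      have h3 : V * V⁻¹ = 1 := mul_inv_cancel₀ (by linarith)
      have h5 := mul_le_mul_of_nonneg_left h1 (show 0 ≤ V by linarith)
      have h6 := mul_le_mul_of_nonneg_right hq1 hε.le
      rw [mul_add, h3] at h5
      linarith
    have h4 : V = V * W⁻¹ * W := by
      rw [mul_assoc, inv_mul_cancel₀ (by linarith), mul_one]
    rw [h4]
    exact mul_le_mul_of_nonneg_right h2 (by linarith)
  have hθ0 : 0 ≤ Real.exp (-χ) + F.K * ε := by positivity
  have hmain : ∀ z z', U * |z - w.x 0| ≤ p → U * |z' - w.x 0| ≤ p →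
      V * |G z - G z'| ≤ (1 + ε) * (Real.exp (-χ) + F.K * ε) * (U * |z - z'|) := by
    intro z z' hz hz'
    have h1 := hL z z' (hsub z hz) (hsub z' hz')
    calc V * |G z - G z'| ≤ (1 + ε) * W * |G z - G z'| :=
          mul_le_mul_of_nonneg_right hVW (abs_nonneg _)
      _ ≤ (1 + ε) * W * ((|(deriv F.f (w.x (-1)))⁻¹| + F.K * p ^ F.β) * |z - z'|) :=
          mul_le_mul_of_nonneg_left h1 (by positivity)
      _ = (1 + ε) * (W * (|(deriv F.f (w.x (-1)))⁻¹| + F.K * p ^ F.β)) * |z - z'| := by ring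
      _ ≤ (1 + ε) * ((Real.exp (-χ) + F.K * ε) * U) * |z - z'| := by gcongr
      _ = _ := by ring
  refine ⟨hmain, ?_, fun z hz => hfg z (hsub2 z (hsub z hz))⟩
  intro z hz
  have h1 := hmain z (w.x 0) hz (by simpa using hp.le)
  rw [hgx] at h1
  have h2 : |G z - v.x 0| ≤ |G z - w.x (-1)| + |w.x (-1) - v.x 0| := abs_sub_le _ _ _
  have h3 : V * |w.x (-1) - v.x 0| ≤ q * ε :=
    (mul_le_mul_of_nonneg_left hov1 (by linarith)).trans hVq8
  set θ := (1 + ε) * (Real.exp (-χ) + F.K * ε) with hθdef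
  have hθn : 0 ≤ θ := by positivity
  have h4 : θ * (U * |z - w.x 0|) ≤ θ * (Real.exp ε * q) :=
    mul_le_mul_of_nonneg_left (hz.trans hpq) hθn
  have h5 := mul_le_mul_of_nonneg_left h2 (show 0 ≤ V by linarith)
  have h6 := mul_le_mul_of_nonneg_right hθ hq.le
  rw [mul_add] at h5
  rw [add_mul] at h6
  linarith

/-- Crossing the boundary: if `e ∈ {0,1/2}` lies between an outside point `y` and the
chart centre, and `f e` is an endpoint, then `f y` is outside `M`. -/
lemma aux_cross (f : ℝ → ℝ) (hm : ∀ x ∈ Mset, f x ∈ Mset) (c R y : ℝ) (hc : c ∈ Mset)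
    (hy : |y - c| < R) (hi : Set.InjOn f (Metric.ball c R)) (hco : ContinuousOn f (Metric.ball c R))
    (hyM : y ∉ Mset) (he : f (max 0 (min y (1/2))) = 0 ∨ f (max 0 (min y (1/2))) = 1/2) :
    f y ∉ Mset := by
  intro hfy
  have hR : 0 < R := (abs_nonneg _).trans_lt hy
  rw [abs_lt] at hy
  have hbt : ∀ a b, a ≤ b → a ∈ Metric.ball c R → b ∈ Metric.ball c R →
      StrictMonoOn f (Set.Icc a b) ∨ StrictAntiOn f (Set.Icc a b) := by
    intro a b hab ha hb
    have hs : Set.Icc a b ⊆ Metric.ball c R := by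
      rw [Real.ball_eq_Ioo] at *
      exact fun z hz => ⟨ha.1.trans_le hz.1, hz.2.trans_lt hb.2⟩
    exact ContinuousOn.strictMonoOn_of_injOn_Icc' hab (hco.mono hs) (hi.mono hs)
  have hyb : y ∈ Metric.ball c R := by rw [Real.ball_eq_Ioo]; constructor <;> linarith
  unfold Mset at *
  have hc1 := hc.1
  have hc2 := hc.2
  have hyc : y < 0 ∨ 1/2 < y := by
    by_contra hcon
    push Not at hcon
    exact hyM hcon
  rcases hyc with h | h
  · have hee : max 0 (min y (1/2)) = 0 := by
      rw [min_eq_left (by linarith), max_eq_left h.le]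
    rw [hee] at he
    obtain ⟨m, hm0, hmM, hmb⟩ : ∃ m, 0 < m ∧ m ≤ 1/2 ∧ m ∈ Metric.ball c R := by
      refine ⟨min (1/2) (c + R/2), by positivity, min_le_left _ _, ?_⟩
      rw [Real.ball_eq_Ioo]
      exact ⟨lt_min (by linarith) (by linarith), (min_le_right _ _).trans_lt (by linarith)⟩
    have hfm := hm m ⟨hm0.le, hmM⟩
    have i1 : y ∈ Set.Icc y m := ⟨le_rfl, by linarith⟩
    have i2 : (0:ℝ) ∈ Set.Icc y m := ⟨by linarith, by linarith⟩
    have i3 : m ∈ Set.Icc y m := ⟨by linarith, le_rfl⟩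
    rcases hbt y m (by linarith) hyb hmb with hmo | hmo
    · have h1 := hmo i1 i2 h
      have h2 := hmo i2 i3 hm0
      rcases he with he | he <;> linarith [hfy.1, hfy.2, hfm.1, hfm.2]
    · have h1 := hmo i1 i2 h
      have h2 := hmo i2 i3 hm0
      rcases he with he | he <;> linarith [hfy.1, hfy.2, hfm.1, hfm.2]
  · have hee : max 0 (min y (1/2)) = 1/2 := by
      rw [min_eq_right h.le, max_eq_right (by norm_num)]
    rw [hee] at he
    obtain ⟨m, hm0, hmM, hmb⟩ : ∃ m, m < 1/2 ∧ 0 ≤ m ∧ m ∈ Metric.ball c R := by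
      refine ⟨max 0 (c - R/2), max_lt (by norm_num) (by linarith), le_max_left _ _, ?_⟩
      rw [Real.ball_eq_Ioo]
      exact ⟨lt_of_lt_of_le (by linarith) (le_max_right _ _), max_lt (by linarith) (by linarith)⟩
    have hfm := hm m ⟨hmM, hm0.le⟩
    have i1 : y ∈ Set.Icc m y := ⟨by linarith, le_rfl⟩
    have i2 : (1/2:ℝ) ∈ Set.Icc m y := ⟨by linarith, by linarith⟩
    have i3 : m ∈ Set.Icc m y := ⟨le_rfl, by linarith⟩
    rcases hbt m y (by linarith) hmb hyb with hmo | hmo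
    · have h1 := hmo i2 i1 h
      have h2 := hmo i3 i2 hm0
      rcases he with he | he <;> linarith [hfy.1, hfy.2, hfm.1, hfm.2]
    · have h1 := hmo i2 i1 h
      have h2 := hmo i3 i2 hm0
      rcases he with he | he <;> linarith [hfy.1, hfy.2, hfm.1, hfm.2]

/-- A gap constant for the images of the endpoints. -/
lemma aux_gap (f : ℝ → ℝ) : ∃ δ > 0, ∀ e e' : ℝ, (e = 0 ∨ e = 1/2) → (e' = 0 ∨ e' = 1/2) →
    |f e - e'| < δ → f e = e' := by
  have h1 : ∀ t : ℝ, ∃ δ > 0, |t| < δ → t = 0 := by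
    intro t
    rcases eq_or_ne t 0 with h | h
    · exact ⟨1, one_pos, fun _ => h⟩
    · exact ⟨|t|, abs_pos.2 h, fun h' => absurd h' (lt_irrefl _)⟩
  obtain ⟨a, ha, ha'⟩ := h1 (f 0 - 0)
  obtain ⟨b, hb, hb'⟩ := h1 (f 0 - 1/2)
  obtain ⟨c, hc, hc'⟩ := h1 (f (1/2) - 0)
  obtain ⟨d, hd, hd'⟩ := h1 (f (1/2) - 1/2)
  refine ⟨min (min a b) (min c d), by positivity, ?_⟩
  rintro e e' (rfl | rfl) (rfl | rfl) h <;> simp only [lt_min_iff] at h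
  · exact sub_eq_zero.1 (ha' h.1.1)
  · exact sub_eq_zero.1 (hb' h.1.2)
  · exact sub_eq_zero.1 (hc' h.2.1)
  · exact sub_eq_zero.1 (hd' h.2.2)

lemma aux_proj (y : ℝ) : max 0 (min y (1/2)) ∈ Mset :=
  ⟨le_max_left _ _, max_le (by norm_num) (min_le_right _ _)⟩

lemma aux_proj_bd (y : ℝ) (hy : y ∉ Mset) :
    max 0 (min y (1/2)) = 0 ∨ max 0 (min y (1/2)) = 1/2 := by
  unfold Mset at hy
  by_cases h : y < 0
  · left; rw [min_eq_left (by linarith), max_eq_left h.le]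
  · right
    have : 1/2 < y := by
      by_contra h'
      exact hy ⟨by linarith, by linarith⟩
    rw [min_eq_right this.le, max_eq_right (by norm_num)]

lemma aux_proj_dist (y c : ℝ) (hc : c ∈ Mset) :
    |max 0 (min y (1/2)) - c| ≤ |y - c| ∧ |max 0 (min y (1/2)) - y| ≤ |y - c| := by
  unfold Mset at hc
  have h1 := hc.1
  have h2 := hc.2
  rcases le_total 0 y with h | h
  · rcases le_total y (1/2) with h' | h'
    · rw [min_eq_left h', max_eq_right h]; simp
    · rw [min_eq_right h', max_eq_right (by norm_num)]
      rw [abs_of_nonneg (by linarith), abs_of_nonneg (by linarith), abs_of_nonpos (by linarith)]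
      constructor <;> linarith
  · rw [min_eq_left (by linarith), max_eq_left h]
    rw [abs_of_nonpos (by linarith), abs_of_nonpos (by linarith), abs_of_nonneg (by linarith)]
    constructor <;> linarith

lemma aux_eps (χ K : ℝ) (hχ : 0 < χ) (δ : ℝ) (hδ : 0 < δ) :
    ∃ ε₀ > 0, ∀ ε : ℝ, 0 < ε → ε < ε₀ → ε ≤ 1 ∧ 2 * ε < δ ∧
      (1 + ε) * (Real.exp (-χ) + K * ε) * Real.exp ε + ε ≤ 1 := by
  have hcont : Continuous (fun ε : ℝ => (1 + ε) * (Real.exp (-χ) + K * ε) * Real.exp ε + ε) := by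
    fun_prop
  have h0 : (1 + (0:ℝ)) * (Real.exp (-χ) + K * 0) * Real.exp 0 + 0 < 1 := by
    simp [hχ]
  have hev := hcont.continuousAt.eventually_lt (continuousAt_const (y := (1:ℝ))) h0
  obtain ⟨s, hs, hs'⟩ := Metric.eventually_nhds_iff.1 hev
  refine ⟨min s (min 1 (δ/2)), by positivity, fun ε hε h => ?_⟩
  simp only [lt_min_iff] at h
  refine ⟨h.2.1.le, by linarith [h.2.2], (hs' ?_).le⟩
  rw [Real.dist_eq, sub_zero, abs_of_pos hε]
  exact h.1

lemma aux_range (F : GoodMap) (χ : ℝ) (c : Chart) (hU : 1 ≤ uPes F.f χ c.x) (z : ℝ) :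
    z ∈ chartRange F χ c ↔ uPes F.f χ c.x * |z - c.x 0| ≤ c.p := by
  have hU0 : 0 < uPes F.f χ c.x := by linarith
  have habs : uPes F.f χ c.x * |z - c.x 0| = |uPes F.f χ c.x * (z - c.x 0)| := by
    rw [abs_mul, abs_of_pos hU0]
  rw [habs, abs_le]
  unfold chartRange Psi
  constructor
  · rintro ⟨t, ht, rfl⟩
    have : uPes F.f χ c.x * (t / uPes F.f χ c.x + c.x 0 - c.x 0) = t := by field_simp; ring
    rw [this]; exact ht
  · intro h
    refine ⟨_, h, ?_⟩
    simp only
    field_simp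
    ring

/-- shadowing lemma (Lemma 3.3): every weak ε-gpo shadows a unique point. -/
theorem shadowing_lemma (F : GoodMap) (hA : F.SatA) (χ : ℝ) (hχ : 0 < χ) :
    ∃ ε₀ > 0, ∀ ε : ℝ, 0 < ε → ε < ε₀ →
      ∀ v : ℤ → Chart, IsWeakGPO F χ ε v → ∃! x : ℤ → ℝ, Shadows F χ v x := by
  obtain ⟨δ, hδ, hgap⟩ := aux_gap F.f
  obtain ⟨ε₀, hε₀, hε₀'⟩ := aux_eps χ F.K hχ δ hδ
  refine ⟨ε₀, hε₀, fun ε hε hεlt v hv => ?_⟩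
  obtain ⟨hε1, hεδ, hθ⟩ := hε₀' ε hε hεlt
  have hKp := F.hK
  have hchart : ∀ n, IsChart F χ ε (v n) := fun n => (hv n).1
  have hU : ∀ n, 1 ≤ uPes F.f χ (v n).x := fun n => (aux_chart F χ ε hε hε1 _ (hchart n)).1
  have hpε : ∀ n, (v n).p ≤ ε := fun n => (aux_chart F χ ε hε hε1 _ (hchart n)).2.2.2.2.1
  have hp0 : ∀ n, 0 < (v n).p := fun n => (hchart n).2.1
  have hcM : ∀ n, (v n).x 0 ∈ Mset := fun n => (hchart n).1.1.1 0
  have hedge := fun n => aux_edge F hA χ ε hε hε1 hθ (v n) (v (n+1)) (hv n)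
  have hball := fun n => aux_chart_ball F hA χ ε hε hε1 (v n) (hchart n)
  set θ := (1 + ε) * (Real.exp (-χ) + F.K * ε) with hθdef
  have hθ0 : 0 ≤ θ := by positivity
  have hθ1 : θ < 1 := by
    have : 1 ≤ Real.exp ε := Real.one_le_exp hε.le
    nlinarith
  let c : ℤ → ℝ := fun n => (v n).x 0
  let U : ℤ → ℝ := fun n => uPes F.f χ (v n).x
  let p : ℤ → ℝ := fun n => (v n).p
  let G : ℤ → ℝ → ℝ := fun n => F.g ((v (n+1)).x (-1))
  have hle : ∀ n z, U n * |z - c n| ≤ p n → |z - c n| ≤ p n := by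
    intro n z hz
    have := hU n
    have h1 : |z - c n| ≤ U n * |z - c n| := le_mul_of_one_le_left (abs_nonneg _) this
    exact h1.trans hz
  -- existence of a real orbit
  obtain ⟨y, hy⟩ := aux_exists_orbit c U p G θ hθ0 hθ1 hU hp0 (fun n => (hpε n).trans hε1)
    (fun n z hz => (hedge n).2.1 z hz) (fun n z w hz hw => (hedge n).1 z w hz hw)
  have hfy : ∀ n, F.f (y n) = y (n+1) := by
    intro n
    rw [(hy n).2]
    exact (hedge n).2.2 _ (hy (n+1)).1
  -- existence of a shadowed point in `M̂`
  have hex : ∃ x, Shadows F χ v x := by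
    by_cases hall : ∀ n, y n ∈ Mset
    · refine ⟨y, ⟨hall, fun n => ?_⟩, fun n => ?_⟩
      · rw [hfy, sub_add_cancel]
      · rw [aux_range F χ (v n) (hU n)]; exact (hy n).1
    · push Not at hall
      obtain ⟨k, hk⟩ := hall
      let e : ℤ → ℝ := fun n => max 0 (min (y n) (1/2))
      have hback : ∀ n, y (n+1) ∉ Mset → y n ∉ Mset := by
        intro n hn hn'
        exact hn (by rw [← hfy]; exact F.hmaps _ hn')
      have hestep : ∀ n, y n ∉ Mset → y (n+1) ∉ Mset → F.f (e n) = e (n+1) := by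
        intro n h0 h1
        refine hgap (e n) (e (n+1)) (aux_proj_bd _ h0) (aux_proj_bd _ h1) ?_
        obtain ⟨R, -, -, -, hR⟩ := hball n
        have d0 := aux_proj_dist (y n) (c n) (hcM n)
        have d1 := aux_proj_dist (y (n+1)) (c (n+1)) (hcM (n+1))
        have b0 := hle n _ (hy n).1
        have b1 := hle (n+1) _ (hy (n+1)).1
        have h2 : |F.f (e n) - F.f (y n)| ≤ ε :=
          hR (y n) (e n) b0 (d0.1.trans b0) (d0.2.trans b0)
        have h3 : |e (n+1) - y (n+1)| ≤ ε := (d1.2.trans b1).trans (hpε (n+1))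
        rw [hfy] at h2
        rw [abs_sub_comm] at h3
        have := abs_sub_le (F.f (e n)) (y (n+1)) (e (n+1))
        linarith
      have hfwd : ∀ n, y (n+1+1) ∉ Mset → y (n+1+1+1) ∉ Mset := by
        intro n h2
        have h1 := hback _ h2
        have h0 := hback _ h1
        have s0 := hestep _ h0 h1
        have s1 := hestep _ h1 h2
        have b0 : e n = 0 ∨ e n = 1/2 := aux_proj_bd _ h0
        have b1 : e (n+1) = 0 ∨ e (n+1) = 1/2 := aux_proj_bd _ h1
        have b2 : e (n+1+1) = 0 ∨ e (n+1+1) = 1/2 := aux_proj_bd _ h2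
        have hbd : F.f (e (n+1+1)) = 0 ∨ F.f (e (n+1+1)) = 1/2 := by
          rcases b0 with b0 | b0 <;> rcases b1 with b1 | b1 <;> rcases b2 with b2 | b2 <;>
            rw [b0, b1] at s0 <;> rw [b1, b2] at s1 <;> rw [b2] <;>
            first
            | exact Or.inl s0
            | exact Or.inr s0
            | exact Or.inl s1
            | exact Or.inr s1
            | (exfalso; linarith)
        obtain ⟨R, hpR, hi, hco, -⟩ := hball (n+1+1)
        rw [← hfy (n+1+1)]
        exact aux_cross F.f F.hmaps _ R _ (hcM (n+1+1))
          ((hle _ _ (hy (n+1+1)).1).trans_lt hpR) hi hco h2 hbd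
      have hout : ∀ n, y n ∉ Mset := by
        intro n
        induction n using Int.inductionOn' (b := k) with
        | zero => exact hk
        | succ m _ ih =>
          have := hfwd (m - 2) (by convert ih using 2; ring_nf)
          convert this using 2; ring_nf
        | pred m _ ih => exact hback (m - 1) (by rwa [sub_add_cancel])
      refine ⟨e, ⟨fun n => aux_proj _, fun n => ?_⟩, fun n => ?_⟩
      · have := hestep (n-1) (hout _) (hout _)
        rwa [sub_add_cancel] at this
      · rw [aux_range F χ (v n) (hU n)]
        refine le_trans ?_ (hy n).1
        exact mul_le_mul_of_nonneg_left (aux_proj_dist (y n) (c n) (hcM n)).1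
          (zero_le_one.trans (hU n))
  -- uniqueness
  have horb : ∀ x, Shadows F χ v x → ∀ n, U n * |x n - c n| ≤ p n ∧ x n = G n (x (n+1)) := by
    intro x hx n
    have hin : ∀ n, U n * |x n - c n| ≤ p n := fun n => (aux_range F χ (v n) (hU n) _).1 (hx.2 n)
    refine ⟨hin n, ?_⟩
    obtain ⟨R, hpR, hi, -, -⟩ := hball n
    apply hi
    · rw [Metric.mem_ball, Real.dist_eq]
      exact (hle _ _ (hin n)).trans_lt hpR
    · rw [Metric.mem_ball, Real.dist_eq]
      exact (hle _ _ ((hedge n).2.1 _ (hin (n+1)))).trans_lt hpR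
    · have h1 := hx.1.2 (n+1)
      rw [add_sub_cancel_right] at h1
      rw [h1]
      exact ((hedge n).2.2 _ (hin (n+1))).symm
  obtain ⟨x, hx⟩ := hex
  refine ⟨x, hx, fun x' hx' => ?_⟩
  exact aux_unique_orbit c U p G θ hθ0 hθ1 hU (fun n => (hpε n).trans hε1)
    (fun n z w hz hw => (hedge n).1 z w hz hw) x' x (horb x' hx') (horb x hx)

end OneDim
end
end

section
/- Assume f satisfies (A1)–(A3) and fix χ > 0. There is ε₀ > 0 such that for all 0 < ε < ε₀: if {Ψ_{x̂_n}^{p_n}}_{n≤0} is a negative weak ε-gpo and ŷ = (y_n)_{n∈ℤ}, ẑ = (z_n)_{n∈ℤ} both belong to its unstable set V^u[{Ψ_{x̂_n}^{p_n}}_{n≤0}] := {x̂ ∈ M̂ : ϑ_n[x̂] ∈ Ψ_{x̂_n}([−p_n, p_n]) for all n ≤ 0}, then d(y_n, z_n) ≤ 2 p₀ e^{χn/2} for all n ≤ 0; consequently d̂(f̂^n(ŷ), f̂^n(ẑ)) ≤ 2 p₀ e^{χn/2} for all n ≤ 0. -/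
open Real MeasureTheory Filter Topology Metric Set

noncomputable section

namespace OneDim

lemma dfhat_zero (f : ℝ → ℝ) (x : ℤ → ℝ) : dfhat f x 0 = 1 := by
  simp [dfhat]

lemma dfhat_succ (f : ℝ → ℝ) (x : ℤ → ℝ) (n : ℕ) :
    dfhat f x (-((n + 1 : ℕ) : ℤ)) =
      (deriv f (x (-1)))⁻¹ * dfhat f (fhatI (-1) x) (-(n : ℤ)) := by
  have key : ∀ (y : ℤ → ℝ) (m : ℕ), dfhat f y (-(m : ℤ)) =
      (∏ j ∈ Finset.range m, deriv f (y (-(j : ℤ) - 1)))⁻¹ := by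
    intro y m
    rcases Nat.eq_zero_or_pos m with rfl | hm
    · simp [dfhat]
    · have : ¬ (0 : ℤ) ≤ -(m : ℤ) := by omega
      rw [dfhat, if_neg this]
      simp
  rw [key, key, Finset.prod_range_succ', mul_inv, mul_comm]
  congr 2
  apply Finset.prod_congr rfl
  intro j _
  congr 1
  simp only [fhatI]
  congr 1
  push_cast
  ring

/-- Basic facts on `u` when it does not vanish (so that the defining series converges). -/
lemma uPes_rec (f : ℝ → ℝ) (χ : ℝ) (x : ℤ → ℝ) (hu : uPes f χ x ≠ 0)
    (hd : deriv f (x (-1)) ≠ 0) :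
    1 ≤ uPes f χ x ∧ 1 ≤ uPes f χ (fhatI (-1) x) ∧
    Real.exp χ * uPes f χ (fhatI (-1) x) ≤ |deriv f (x (-1))| * uPes f χ x := by
  set T : (ℤ → ℝ) → ℕ → ℝ := fun y n =>
    Real.exp (2 * (n:ℝ) * χ) * (dfhat f y (-(n:ℤ))) ^ 2 with hT
  have hTn : ∀ y n, 0 ≤ T y n := fun y n => by simp only [hT]; positivity
  have hdef : ∀ y, uPes f χ y = Real.sqrt (∑' n, T y n) := fun y => rfl
  have hS : Summable (T x) := by
    by_contra h
    apply hu
    rw [hdef, tsum_eq_zero_of_not_summable h, Real.sqrt_zero]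
  have h0 : ∀ y, T y 0 = 1 := by
    intro y
    have := dfhat_zero f y
    simp [hT, this]
  set d := deriv f (x (-1)) with hdd
  set c := Real.exp (2 * χ) * (d⁻¹) ^ 2 with hc
  have hc0 : c ≠ 0 := by
    have := inv_ne_zero hd
    positivity
  have hs : ∀ n, T x (n + 1) = c * T (fhatI (-1) x) n := by
    intro n
    simp only [hT]
    rw [dfhat_succ, hc]
    have : Real.exp (2 * ((n + 1 : ℕ) : ℝ) * χ) =
        Real.exp (2 * χ) * Real.exp (2 * (n : ℝ) * χ) := by
      rw [← Real.exp_add]; congr 1; push_cast; ring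
    rw [this]; ring
  have hS' : Summable (T (fhatI (-1) x)) := by
    have h1 : Summable (fun n => T x (n + 1)) := (summable_nat_add_iff 1).2 hS
    simp only [hs] at h1
    exact (summable_mul_left_iff hc0).1 h1
  have hge : ∀ y, Summable (T y) → 1 ≤ uPes f χ y := by
    intro y hy
    rw [hdef, Real.one_le_sqrt, ← h0 y]
    exact hy.le_tsum 0 (fun j _ => hTn y j)
  refine ⟨hge _ hS, hge _ hS', ?_⟩
  have hsum : ∑' n, T x n = 1 + c * ∑' n, T (fhatI (-1) x) n := by
    rw [hS.tsum_eq_zero_add, h0, ← tsum_mul_left]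
    simp only [hs]
  have sq1 : uPes f χ x ^ 2 = ∑' n, T x n := Real.sq_sqrt (tsum_nonneg (hTn x))
  have sq2 : uPes f χ (fhatI (-1) x) ^ 2 = ∑' n, T (fhatI (-1) x) n :=
    Real.sq_sqrt (tsum_nonneg (hTn _))
  rw [← sq1, ← sq2] at hsum
  have hun : 0 ≤ uPes f χ x := Real.sqrt_nonneg _
  have hun' : 0 ≤ uPes f χ (fhatI (-1) x) := Real.sqrt_nonneg _
  refine (sq_le_sq₀ (by positivity) (by positivity)).1 ?_
  rw [mul_pow, mul_pow, sq_abs, hsum, hc, ← Real.exp_nat_mul]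
  have : d ^ 2 * (1 + Real.exp (2 * χ) * d⁻¹ ^ 2 * uPes f χ (fhatI (-1) x) ^ 2) =
      d ^ 2 + Real.exp (2 * χ) * uPes f χ (fhatI (-1) x) ^ 2 := by
    field_simp
  rw [this]
  push_cast
  nlinarith [sq_nonneg d]

lemma dS_nonneg (F : GoodMap) (x : ℝ) : 0 ≤ F.dS x := Metric.infDist_nonneg

lemma S_sub (F : GoodMap) : F.S ⊆ Mset := by
  rintro x (hx | hx)
  · exact hx.1.1
  · exact F.hD hx

lemma dS_le_one (F : GoodMap) (x : ℝ) (hx : x ∈ Mset) : F.dS x ≤ 1 := by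
  rcases F.S.eq_empty_or_nonempty with h | ⟨s, hs⟩
  · simp [GoodMap.dS, h]
  · refine (Metric.infDist_le_dist_of_mem hs).trans ?_
    have := S_sub F hs
    simp only [Mset, Set.mem_Icc] at hx this
    rw [Real.dist_eq, abs_le]
    constructor <;> linarith

lemma rho_nonneg (F : GoodMap) (x : ℤ → ℝ) : 0 ≤ rho F x :=
  le_min (dS_nonneg _ _) (le_min (dS_nonneg _ _) (dS_nonneg _ _))

/-- Consequences of being an ε-chart. -/
lemma chart_facts (F : GoodMap) (χ ε : ℝ) (hε : 0 < ε) (c : Chart)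
    (hc : IsChart F χ ε c) :
    uPes F.f χ c.x ≠ 0 ∧ 0 < rho F c.x ∧
    c.p ≤ ε ^ (3 / F.β) * uPes F.f χ c.x ^ (-(24 / F.β)) ∧
    (1 ≤ uPes F.f χ (fhatI (-1) c.x) →
      c.p ≤ ε ^ (3 / F.β) * rho F c.x ^ (72 * F.a / F.β)) := by
  obtain ⟨hN, hp, hQ⟩ := hc
  have hβ := F.hβ0
  have ha := F.ha
  have hu : 0 ≤ uPes F.f χ c.x := Real.sqrt_nonneg _
  have hu' : 0 ≤ uPes F.f χ (fhatI (-1) c.x) := Real.sqrt_nonneg _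
  have hr := rho_nonneg F c.x
  have hqt : c.p ≤ Qtilde F χ ε c.x := by
    refine hQ.trans (Real.sSup_le (fun q hq => hq.2) ?_)
    unfold Qtilde
    have : 0 ≤ min (uPes F.f χ c.x ^ (-(24 / F.β)))
      (uPes F.f χ (fhatI (-1) c.x) ^ (-(12 / F.β)) * rho F c.x ^ (72 * F.a / F.β)) :=
      le_min (by positivity) (by positivity)
    positivity
  have he : 0 < ε ^ (3 / F.β) := by positivity
  have h1 : c.p ≤ ε ^ (3 / F.β) * uPes F.f χ c.x ^ (-(24 / F.β)) :=
    hqt.trans (mul_le_mul_of_nonneg_left (min_le_left _ _) he.le)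
  have h2 : c.p ≤ ε ^ (3 / F.β) *
      (uPes F.f χ (fhatI (-1) c.x) ^ (-(12 / F.β)) * rho F c.x ^ (72 * F.a / F.β)) :=
    hqt.trans (mul_le_mul_of_nonneg_left (min_le_right _ _) he.le)
  refine ⟨?_, ?_, h1, ?_⟩
  · intro h
    rw [h, Real.zero_rpow (by have : 0 < 24 / F.β := by positivity
                              linarith)] at h1
    linarith
  · rcases hr.lt_or_eq with h | h
    · exact h
    · rw [← h, Real.zero_rpow (by positivity)] at h2
      linarith
  · intro hge
    refine h2.trans (mul_le_mul_of_nonneg_left ?_ he.le)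
    have : uPes F.f χ (fhatI (-1) c.x) ^ (-(12 / F.β)) ≤ 1 :=
      Real.rpow_le_one_of_one_le_of_nonpos hge (by
        have : 0 < 12 / F.β := by positivity
        linarith)
    exact mul_le_of_le_one_left (by positivity) this

/-- Non-vanishing of the derivative off the singular set. -/
lemma deriv_ne (F : GoodMap) (x : ℝ) (hx : x ∈ Mset) (hS : x ∉ F.S) : deriv F.f x ≠ 0 := by
  intro h
  apply hS
  by_cases hD : x ∈ F.D
  · exact Or.inr hD
  · exact Or.inl ⟨⟨hx, hD⟩, h⟩

/-- Points in the range of a chart. -/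
lemma range_abs (F : GoodMap) (χ : ℝ) (c : Chart) (hu : 1 ≤ uPes F.f χ c.x) (y : ℝ)
    (hy : y ∈ chartRange F χ c) : uPes F.f χ c.x * |y - c.x 0| ≤ c.p := by
  obtain ⟨t, ht, rfl⟩ := hy
  have hu0 : 0 < uPes F.f χ c.x := by linarith
  simp only [Psi, add_sub_cancel_right, abs_div, abs_of_pos hu0]
  rw [mul_div_cancel₀ _ hu0.ne']
  exact abs_le.2 ht

/-- Mean value theorem on a ball, in the form of a lower bound. -/
lemma mvt_lower (f : ℝ → ℝ) (c R m : ℝ) (q : ℝ) (hq : q < R)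
    (hd : ∀ y ∈ Metric.ball c R, DifferentiableAt ℝ f y)
    (hm : ∀ y, |y - c| ≤ q → m ≤ |deriv f y|)
    (y z : ℝ) (hy : |y - c| ≤ q) (hz : |z - c| ≤ q) :
    m * |y - z| ≤ |f y - f z| := by
  wlog h : y < z generalizing y z
  · rcases (not_lt.1 h).lt_or_eq with h' | h'
    · rw [abs_sub_comm y z, abs_sub_comm (f y)]
      exact this z y hz hy h'
    · simp [h']
  have hin : ∀ t ∈ Set.Icc y z, |t - c| ≤ q := by
    intro t ht
    rw [abs_le] at *
    constructor <;> linarith [ht.1, ht.2]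
  have hdi : ∀ t ∈ Set.Icc y z, DifferentiableAt ℝ f t := fun t ht => hd t (by
    rw [Metric.mem_ball, Real.dist_eq]
    exact (hin t ht).trans_lt hq)
  obtain ⟨ξ, hξ, he⟩ := exists_deriv_eq_slope f h
    (fun t ht => (hdi t ht).continuousAt.continuousWithinAt)
    (fun t ht => (hdi t (Set.Ioo_subset_Icc_self ht)).differentiableWithinAt)
  have h1 := hm ξ (hin ξ (Set.Ioo_subset_Icc_self hξ))
  rw [he, abs_div, le_div_iff₀ (abs_pos.2 (by linarith))] at h1
  rwa [abs_sub_comm y z, abs_sub_comm (f y)]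

set_option maxHeartbeats 1000000 in
/-- One step contraction. -/
lemma step (F : GoodMap) (hA : F.SatA) (χ : ℝ) (hχ : 0 < χ) (ε : ℝ) (hε : 0 < ε)
    (hεK : ε * (2 * F.K) ≤ 1) (hεχ : ε * (4 + χ) ≤ χ) (v w : Chart)
    (hvw : WeakEdge F χ ε v w) (y z : ℝ)
    (hy : y ∈ chartRange F χ v) (hz : z ∈ chartRange F χ v) :
    uPes F.f χ v.x * |y - z| ≤
      Real.exp (-(χ / 2)) * (uPes F.f χ w.x * |F.f y - F.f z|) := by
  obtain ⟨hv, hw, ⟨-, -, hov⟩, -⟩ := hvw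
  have hβ := F.hβ0
  have hβ1 := F.hβ1
  have ha := F.ha
  have hK := F.hK
  have hε1 : ε < 1 := by nlinarith
  obtain ⟨hu, hρ, hpu, hpρ⟩ := chart_facts F χ ε hε v hv
  obtain ⟨hUw, -, -, -⟩ := chart_facts F χ ε hε w hw
  obtain ⟨⟨hvM, hvf⟩, hvS, -, -⟩ := hv.1
  obtain ⟨⟨hwM, hwf⟩, hwS, -, -⟩ := hw.1
  obtain ⟨hu1, huf1, -⟩ := uPes_rec F.f χ v.x hu (deriv_ne F _ (hvM _) (hvS _))
  obtain ⟨hw1, hwf1, hrec⟩ := uPes_rec F.f χ w.x hUw (deriv_ne F _ (hwM _) (hwS _))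
  replace hpρ := hpρ huf1
  have hp0 := hv.2.1
  have hfx : F.f (v.x 0) = v.x 1 := by simpa using hvf 1
  obtain ⟨⟨hr, -⟩, ⟨-, hdf, -⟩, ⟨hA2, -⟩, ⟨hA3, -⟩⟩ :=
    hA (v.x 0) (hvM 0) (hvS 0) (by rw [hfx]; exact hvS 1)
  rw [hfx] at hr
  set ρ := rho F v.x with hρd
  have hρ0 : ρ ≤ F.dS (v.x 0) := (min_le_right _ _).trans (min_le_left _ _)
  have hρ1 : ρ ≤ F.dS (v.x 1) := (min_le_right _ _).trans (min_le_right _ _)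
  have hρle : ρ ≤ 1 := hρ0.trans (dS_le_one F _ (hvM 0))
  have hρr : ρ ^ F.a < F.r (v.x 0) := by
    refine lt_of_le_of_lt (le_min ?_ ?_) hr
    · exact Real.rpow_le_rpow hρ.le hρ0 (by linarith)
    · exact Real.rpow_le_rpow hρ.le hρ1 (by linarith)
  have hρa : 0 < ρ ^ F.a := by positivity
  set q := v.p with hqd
  set u := uPes F.f χ v.x with hud
  set u' := uPes F.f χ (fhatI (-1) w.x) with hu'd
  set U := uPes F.f χ w.x with hUd
  set x := w.x (-1) with hxd
  have hov2 : |x - v.x 0| + |u'⁻¹ - u⁻¹| < (q * q) ^ 4 := by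
    simpa [fhatI] using hov
  -- size of `q`
  have h3β : 1 ≤ 3 / F.β := by rw [le_div_iff₀ hβ]; linarith
  have heε : ε ^ (3 / F.β) ≤ ε := by
    simpa using Real.rpow_le_rpow_of_exponent_ge hε hε1.le h3β
  have he0 : 0 < ε ^ (3 / F.β) := by positivity
  have hqβ : q ^ F.β ≤ ε ^ 3 * ρ ^ F.a := by
    calc q ^ F.β ≤ (ε ^ (3 / F.β) * ρ ^ (72 * F.a / F.β)) ^ F.β :=
          Real.rpow_le_rpow hp0.le hpρ hβ.le
      _ = ε ^ 3 * ρ ^ (72 * F.a) := by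
          rw [Real.mul_rpow he0.le (by positivity), ← Real.rpow_mul hε.le,
            ← Real.rpow_mul hρ.le, div_mul_cancel₀ _ hβ.ne', div_mul_cancel₀ _ hβ.ne']
          norm_cast
      _ ≤ ε ^ 3 * ρ ^ F.a := by
          gcongr ?_ * ?_
          exact Real.rpow_le_rpow_of_exponent_ge hρ hρle (by linarith)
  have hqρ : q ≤ ρ ^ F.a := by
    refine hpρ.trans ?_
    have : ρ ^ (72 * F.a / F.β) ≤ ρ ^ F.a := by
      apply Real.rpow_le_rpow_of_exponent_ge hρ hρle
      rw [le_div_iff₀ hβ]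
      nlinarith
    nlinarith
  have hq1 : q ≤ 1 := hqρ.trans (Real.rpow_le_one hρ.le hρle (by linarith))
  have hqu : u * q ≤ ε := by
    have h1 : u ^ (-(24 / F.β)) ≤ u ^ (-1 : ℝ) := by
      apply Real.rpow_le_rpow_of_exponent_le hu1
      have : 1 ≤ 24 / F.β := by rw [le_div_iff₀ hβ]; linarith
      linarith
    rw [Real.rpow_neg_one] at h1
    have h2 : q ≤ ε * u⁻¹ := hpu.trans (mul_le_mul heε h1 (by positivity) hε.le)
    have hu0 : 0 < u := by linarith
    rw [← div_eq_mul_inv, le_div_iff₀ hu0] at h2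
    linarith
  have hq8 : (q * q) ^ 4 ≤ q := by
    have : (q * q) ^ 4 = q ^ 7 * q := by ring
    rw [this]
    exact mul_le_of_le_one_left hp0.le (pow_le_one₀ hp0.le hq1)
  have hx : |x - v.x 0| ≤ q := by linarith [abs_nonneg (u'⁻¹ - u⁻¹)]
  have huu : |u'⁻¹ - u⁻¹| ≤ q := by linarith [abs_nonneg (x - v.x 0)]
  have hqR : q < 2 * F.r (v.x 0) := by linarith
  have hball : ∀ t, |t - v.x 0| ≤ q → t ∈ Metric.ball (v.x 0) (2 * F.r (v.x 0)) := by
    intro t ht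
    rw [Metric.mem_ball, Real.dist_eq]
    linarith
  have hab : ∀ t ∈ chartRange F χ v, |t - v.x 0| ≤ q := by
    intro t ht
    have h1 := range_abs F χ v hu1 t ht
    nlinarith [abs_nonneg (t - v.x 0)]
  -- derivative comparison
  have hdx : ρ ^ F.a ≤ |deriv F.f x| :=
    (Real.rpow_le_rpow hρ.le hρ0 (by linarith)).trans (hA2 x (hball x hx)).1
  have hder : ∀ t, |t - v.x 0| ≤ q → (1 - ε) * |deriv F.f x| ≤ |deriv F.f t| := by
    intro t ht
    have h1 := hA3 x (hball x hx) t (hball t ht)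
    have h2 : |x - t| ≤ 2 * q := by
      rw [abs_le] at *
      constructor <;> linarith
    have h3 : |x - t| ^ F.β ≤ 2 * (ε ^ 3 * ρ ^ F.a) := by
      calc |x - t| ^ F.β ≤ (2 * q) ^ F.β := Real.rpow_le_rpow (abs_nonneg _) h2 hβ.le
        _ = 2 ^ F.β * q ^ F.β := Real.mul_rpow (by norm_num) hp0.le
        _ ≤ 2 * (ε ^ 3 * ρ ^ F.a) := by
          refine mul_le_mul ?_ hqβ (by positivity) (by norm_num)
          simpa using Real.rpow_le_rpow_of_exponent_le (x := 2) (by norm_num) hβ1.le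
    have h4 : F.K * |x - t| ^ F.β ≤ ε * |deriv F.f x| := by
      calc F.K * |x - t| ^ F.β ≤ F.K * (2 * (ε ^ 3 * ρ ^ F.a)) := by gcongr
        _ = (ε * (2 * F.K)) * (ε ^ 2 * ρ ^ F.a) := by ring
        _ ≤ 1 * (ε ^ 2 * ρ ^ F.a) := by gcongr
        _ ≤ ε * ρ ^ F.a := by
          rw [one_mul]; gcongr; nlinarith
        _ ≤ ε * |deriv F.f x| := by gcongr
    have h5 := abs_sub_abs_le_abs_sub (deriv F.f x) (deriv F.f t)
    linarith
  have hmvt := mvt_lower F.f (v.x 0) (2 * F.r (v.x 0)) ((1 - ε) * |deriv F.f x|) q hqR hdf hder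
    y z (hab y hy) (hab z hz)
  -- comparison of the two Pesin parameters
  have huu2 : u ≤ (1 + ε) * u' := by
    have h1 : u'⁻¹ ≤ u⁻¹ + q := by linarith [(abs_le.1 huu).2]
    have hu0 : 0 < u := by linarith
    have hu'0 : 0 < u' := by linarith
    have h2 : u * u'⁻¹ ≤ 1 + ε := by
      calc u * u'⁻¹ ≤ u * (u⁻¹ + q) := by gcongr
        _ = 1 + u * q := by field_simp
        _ ≤ 1 + ε := by linarith
    rwa [← div_eq_mul_inv, div_le_iff₀ hu'0] at h2
  have hexp : 1 + ε ≤ Real.exp (χ / 2) * (1 - ε) := by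
    have h1 := Real.add_one_le_exp (χ / 2)
    have h2 : (χ / 2 + 1) * (1 - ε) ≤ Real.exp (χ / 2) * (1 - ε) :=
      mul_le_mul_of_nonneg_right h1 (by linarith)
    linarith
  have hee : Real.exp χ = Real.exp (χ / 2) * Real.exp (χ / 2) := by
    rw [← Real.exp_add]; congr 1; ring
  have hE := Real.exp_pos (χ / 2)
  rw [Real.exp_neg, inv_mul_eq_div, le_div_iff₀ hE]
  have hN := abs_nonneg (y - z)
  calc u * |y - z| * Real.exp (χ / 2)
      ≤ ((1 + ε) * u') * |y - z| * Real.exp (χ / 2) := by gcongr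
    _ ≤ ((Real.exp (χ / 2) * (1 - ε)) * u') * |y - z| * Real.exp (χ / 2) := by gcongr
    _ = (Real.exp χ * u') * ((1 - ε) * |y - z|) := by rw [hee]; ring
    _ ≤ (|deriv F.f x| * U) * ((1 - ε) * |y - z|) :=
        mul_le_mul_of_nonneg_right hrec (mul_nonneg (by linarith) hN)
    _ = U * ((1 - ε) * |deriv F.f x| * |y - z|) := by ring
    _ ≤ U * |F.f y - F.f z| := mul_le_mul_of_nonneg_left hmvt (by linarith)

/-- exponential contraction in the past along unstable sets. -/
theorem unstable_contraction (F : GoodMap) (hA : F.SatA) (χ : ℝ) (hχ : 0 < χ) :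
    ∃ ε₀ > 0, ∀ ε : ℝ, 0 < ε → ε < ε₀ →
      ∀ v : ℤ → Chart, (∀ n : ℤ, n ≤ 0 → WeakEdge F χ ε (v (n - 1)) (v n)) →
      ∀ y z : ℤ → ℝ, inMhat F.f y → inMhat F.f z →
        (∀ n : ℤ, n ≤ 0 → y n ∈ chartRange F χ (v n)) →
        (∀ n : ℤ, n ≤ 0 → z n ∈ chartRange F χ (v n)) →
        ∀ n : ℤ, n ≤ 0 →
          |y n - z n| ≤ 2 * (v 0).p * Real.exp (χ * (n:ℝ) / 2) ∧
          dhat (fhatI n y) (fhatI n z) ≤ 2 * (v 0).p * Real.exp (χ * (n:ℝ) / 2) := by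
  have hK := F.hK
  refine ⟨min (1 / (2 * F.K)) (χ / (4 + χ)), lt_min (by positivity) (by positivity), ?_⟩
  intro ε hε hε0 v hv y z hy hz hyv hzv
  have hεK : ε * (2 * F.K) ≤ 1 :=
    (le_div_iff₀ (by linarith)).1 (hε0.le.trans (min_le_left _ _))
  have hεχ : ε * (4 + χ) ≤ χ :=
    (le_div_iff₀ (by linarith)).1 (hε0.le.trans (min_le_right _ _))
  have hp0 : 0 < (v 0).p := (hv 0 le_rfl).2.1.2.1
  have hu1 : ∀ n : ℤ, n ≤ 0 → 1 ≤ uPes F.f χ (v n).x := by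
    intro n hn
    have hc := (hv n hn).2.1
    exact (uPes_rec F.f χ _ (chart_facts F χ ε hε _ hc).1
      (deriv_ne F _ (hc.1.1.1 _) (hc.1.2.1 _))).1
  have hmain : ∀ k : ℕ, uPes F.f χ (v (-(k : ℤ))).x * |y (-(k : ℤ)) - z (-(k : ℤ))| ≤
      2 * (v 0).p * Real.exp (χ * (-(k : ℝ)) / 2) := by
    intro k
    induction k with
    | zero =>
      have h1 := range_abs F χ (v 0) (hu1 0 le_rfl) _ (hyv 0 le_rfl)
      have h2 := range_abs F χ (v 0) (hu1 0 le_rfl) _ (hzv 0 le_rfl)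
      have h3 : |y 0 - z 0| ≤ |y 0 - (v 0).x 0| + |z 0 - (v 0).x 0| := by
        rw [abs_sub_comm (z 0)]
        exact abs_sub_le _ _ _
      have h4 := mul_le_mul_of_nonneg_left h3 (zero_le_one.trans (hu1 0 le_rfl))
      simp only [Nat.cast_zero, neg_zero, mul_zero, zero_div, Real.exp_zero, mul_one]
      linarith
    | succ k ih =>
      have hk : (-(k : ℤ)) ≤ 0 := by omega
      have hk1 : (-((k + 1 : ℕ) : ℤ)) = -(k : ℤ) - 1 := by push_cast; ring
      have hk2 : -(k : ℤ) - 1 ≤ 0 := by omega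
      rw [hk1]
      have h1 := step F hA χ hχ ε hε hεK hεχ _ _ (hv _ hk) _ _ (hyv _ hk2) (hzv _ hk2)
      rw [hy.2, hz.2] at h1
      refine h1.trans ((mul_le_mul_of_nonneg_left ih (Real.exp_pos _).le).trans (le_of_eq ?_))
      have : Real.exp (χ * (-((k + 1 : ℕ) : ℝ)) / 2) =
          Real.exp (-(χ / 2)) * Real.exp (χ * (-(k : ℝ)) / 2) := by
        rw [← Real.exp_add]; congr 1; push_cast; ring
      rw [this]; ring
  have hA1 : ∀ n : ℤ, n ≤ 0 →
      |y n - z n| ≤ 2 * (v 0).p * Real.exp (χ * (n:ℝ) / 2) := by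
    intro n hn
    obtain ⟨k, rfl⟩ : ∃ k : ℕ, n = -(k : ℤ) := ⟨n.natAbs, by omega⟩
    have h1 := hmain k
    have h2 := hu1 _ hn
    push_cast
    refine le_trans ?_ h1
    exact le_mul_of_one_le_left (abs_nonneg _) h2
  intro n hn
  refine ⟨hA1 n hn, ?_⟩
  unfold dhat
  refine Real.sSup_le ?_ (by positivity)
  rintro t ⟨m, hm, rfl⟩
  simp only [fhatI]
  have h2m : (2:ℝ) ^ m ≤ 1 := zpow_le_one_of_nonpos₀ (by norm_num) hm
  refine (mul_le_of_le_one_left (abs_nonneg _) h2m).trans ((hA1 (m + n) (by omega)).trans ?_)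
  have hm' : (m : ℝ) ≤ 0 := by exact_mod_cast hm
  gcongr
  linarith

end OneDim
end
end
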